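/- arXiv:1811.10913 — 2 statements merged into one kernel-verified Lean document; each statement's English description precedes it below -/
import Mathlib

section
/- The 1-form ω⁰ := z₁* dz₁ + z₂* dz₂ ∈ Ω¹(A) is ℤ²-homogeneous of degree (0,0) (hence O(U(1))- and O(T²)-coinvariant) and satisfies v(ω⁰) = 1, so ω⁰ ∈ Con(A,δ); moreover Con(A,δ) = {ω⁰ + α : α ∈ B dB}, where B dB := span{b db' : b, b' ∈ B} ⊆ Ω¹(A) is isomorphic, as a B-module with derivation, to Ω¹_{B/ℂ}. Analogously, ω⁰_θ := z₁* d_θ z₁ + z₂* d_θ z₂ ∈ Ω¹(A_θ) is ℤ²-homogeneous of degree (0,0), satisfies v_θ(ω⁰_θ) = 1, and Con(A_θ,δ) = {ω⁰_θ + α : α ∈ B d_θ B}. -/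
/-!
Let `D` be a derivation of `A`, let `ω = ∑ i, zᵢ* • D zᵢ`, and let `H` be the span of the elements
`b • D b'` with `b`, `b'` in the base algebra `B` of degree-`0` elements. Multiplying by
`∑ i, zᵢ* zᵢ = 1` and applying the Leibniz rule moves the degree of `a'` up or down by one, so that
by induction on `n`, `a • D a' - n • (a * a') • ω` lies in `H` for all `a` of degree `-n` and `a'`
of degree `n`. Hence a `1`-form of degree `0` is its vertical part times `ω` plus a form in `B dB`.

`Ω[B] → Ω[A]` is injective because the derivation `b ↦ 1 ⊗ db` from `B` to `A ⊗[B] Ω[B]` extends to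
`A`: it extends degree by degree by `D a = ∑ i, zᵢ • D (zᵢ* * a)`. Going up and then down again
gives back `D` because the trace of `q dq` vanishes for the idempotent matrix `q = (zᵢ* zⱼ)`.
Composing with the projection of `A` onto `B` gives a retraction.

The automorphism of `A ⊗ A` that rescales `a ⊗ a'` by the inverse of the phase in `a ⋆_θ a'` carries
the product of `A` to the star product and each other ingredient of the classical statement (`Γ¹`,
its square, the vertical lift, `B dB`) to its deformed counterpart.
-/

set_option synthInstance.maxHeartbeats 1000000
set_option maxHeartbeats 1000000

open scoped TensorProduct
noncomputable section

/-- The total-degree-`n` component of a `ℤ²`-graded module. -/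
def totalDeg {A : Type} [AddCommMonoid A] [Module ℂ A]
    (𝒜 : ℤ × ℤ → Submodule ℂ A) (n : ℤ) : Submodule ℂ A :=
  ⨆ (p : ℤ × ℤ) (_ : p.1 + p.2 = n), 𝒜 p

/-- The phase factor `e^{πiθ(m₁m₂' − m₂m₁')}`. -/
def phase (θ : ℝ) (p q : ℤ × ℤ) : ℂ :=
  Complex.exp (Complex.I * ((Real.pi * θ : ℝ) : ℂ) * ((p.1 * q.2 - p.2 * q.1 : ℤ) : ℂ))

/-- The cotriangular structure phase `R_θ(t_u ⊗ t_w) = e^{−2πiθ(u₁w₂ − u₂w₁)}`. -/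
def rphase (θ : ℝ) (u w : ℤ × ℤ) : ℂ :=
  Complex.exp (-(Complex.I * ((2 * Real.pi * θ : ℝ) : ℂ) * ((u.1 * w.2 - u.2 * w.1 : ℤ) : ℂ)))

/-- The `ℤ²`-degree-`p` component of `A ⊗ A`. -/
def tensorDeg {A : Type} [CommRing A] [Algebra ℂ A]
    (𝒜 : ℤ × ℤ → Submodule ℂ A) (p : ℤ × ℤ) : Submodule ℂ (A ⊗[ℂ] A) :=
  Submodule.span ℂ
    {x : A ⊗[ℂ] A | ∃ (q r : ℤ × ℤ), ∃ a ∈ 𝒜 q, ∃ a' ∈ 𝒜 r, q + r = p ∧ x = a ⊗ₜ[ℂ] a'}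

/-- The total-degree-`n` part of `A ⊗ A`. -/
def tensorTotalDeg {A : Type} [CommRing A] [Algebra ℂ A]
    (𝒜 : ℤ × ℤ → Submodule ℂ A) (n : ℤ) : Submodule ℂ (A ⊗[ℂ] A) :=
  ⨆ (p : ℤ × ℤ) (_ : p.1 + p.2 = n), tensorDeg 𝒜 p

section Gradings

variable {ι κ k M N : Type*} [CommSemiring k] [AddCommMonoid M] [Module k M]
  [AddCommMonoid N] [Module k N]

/-- The coarsening of a grading along a map `f` of index types: its `j`-th component is the sum of
the components with index in the fibre `f ⁻¹ {j}`. -/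
def coarsen (ℳ : ι → Submodule k M) (f : ι → κ) (j : κ) : Submodule k M :=
  ⨆ (i : ι) (_ : f i = j), ℳ i

lemma le_coarsen (ℳ : ι → Submodule k M) (f : ι → κ) (i : ι) : ℳ i ≤ coarsen ℳ f (f i) :=
  le_iSup₂_of_le i rfl le_rfl

variable [DecidableEq ι] [DecidableEq κ]

/-- The linear map on a graded module `M = ⨁ i, ℳ i` which is `f i` on the component `ℳ i`. -/
def glue (ℳ : ι → Submodule k M) [DirectSum.Decomposition ℳ] (f : ∀ i, ℳ i →ₗ[k] N) :
    M →ₗ[k] N :=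
  DirectSum.toModule k ι N f ∘ₗ (DirectSum.decomposeLinearEquiv ℳ).toLinearMap

lemma glue_of_mem (ℳ : ι → Submodule k M) [DirectSum.Decomposition ℳ] (f : ∀ i, ℳ i →ₗ[k] N)
    {i : ι} {x : M} (hx : x ∈ ℳ i) : glue ℳ f x = f i ⟨x, hx⟩ := by
  lift x to ℳ i using hx
  rw [glue, LinearMap.comp_apply, LinearEquiv.coe_coe, DirectSum.decomposeLinearEquiv_apply_coe,
    DirectSum.toModule_lof]

instance coarsen.decomposition (ℳ : ι → Submodule k M) [DirectSum.Decomposition ℳ] (f : ι → κ) :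
    DirectSum.Decomposition (coarsen ℳ f) := by
  let split : M →ₗ[k] DirectSum κ fun j => coarsen ℳ f j :=
    glue ℳ fun i => DirectSum.lof k κ (fun j => coarsen ℳ f j) (f i) ∘ₗ
      Submodule.inclusion (le_coarsen ℳ f i)
  have left_inv : DirectSum.coeLinearMap (coarsen ℳ f) ∘ₗ split = .id :=
    DirectSum.decompose_lhom_ext ℳ fun i => LinearMap.ext fun x => by
      simp [split, glue_of_mem ℳ _ x.2]
  have split_mem (j : κ) : coarsen ℳ f j ≤
      (LinearMap.range (DirectSum.lof k κ (fun j => coarsen ℳ f j) j)).comap split := by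
    refine iSup₂_le fun i hi x hx => ?_
    subst hi
    rw [Submodule.mem_comap, glue_of_mem ℳ _ hx]
    exact LinearMap.mem_range_self _ _
  refine .ofLinearMap _ split left_inv
    (DirectSum.linearMap_ext k fun j => LinearMap.ext fun x => ?_)
  obtain ⟨y, hy⟩ := split_mem j x.2
  have hyx : y = x := Subtype.ext <| by
    simpa [← hy] using LinearMap.congr_fun left_inv (x : M)
  simp [← hy, hyx]

instance coarsen.gradedAlgebra [AddMonoid ι] [AddMonoid κ] {A : Type*} [Semiring A] [Algebra k A]
    (𝒜 : ι → Submodule k A) [GradedAlgebra 𝒜] (f : ι →+ κ) : GradedAlgebra (coarsen 𝒜 f) where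
  one_mem := map_zero f ▸ le_coarsen 𝒜 f 0 SetLike.GradedOne.one_mem
  mul_mem := by
    intro i j a b ha hb
    have : coarsen 𝒜 f i * coarsen 𝒜 f j ≤ coarsen 𝒜 f (i + j) := by
      simp only [coarsen, Submodule.iSup_mul, Submodule.mul_iSup, iSup_le_iff, Submodule.mul_le]
      rintro q rfl p rfl a ha b hb
      rw [← map_add]
      exact le_coarsen 𝒜 f (p + q) (SetLike.GradedMul.mul_mem ha hb)
    exact this (Submodule.mul_mem_mul ha hb)

end Gradings

instance totalDeg.gradedAlgebra {A : Type} [CommRing A] [Algebra ℂ A]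
    (𝒜 : ℤ × ℤ → Submodule ℂ A) [GradedAlgebra 𝒜] : GradedAlgebra (totalDeg 𝒜) :=
  inferInstanceAs (GradedAlgebra (coarsen 𝒜 (AddMonoidHom.coprod (.id ℤ) (.id ℤ))))

section VerticalPart

variable {k A M ι : Type*} [CommRing k] [CommRing A] [Algebra k A] [AddCommGroup M] [Module k M]
  [Module A M] [Fintype ι]

/-- Finite families `u` in degree `d` and `v` in degree `-d` with `∑ i, v i * u i = 1`, such as the
coordinate functions `z₁, z₂` and `z₁*, z₂*` of the Hopf fibration with `d = 1`. -/
structure IsFrame (ℬ : ℤ → Submodule k A) (d : ℤ) (u v : ι → A) : Prop where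
  mem (i : ι) : u i ∈ ℬ d
  dual_mem (i : ι) : v i ∈ ℬ (-d)
  sum_mul : ∑ i, v i * u i = 1

lemma IsFrame.symm {ℬ : ℤ → Submodule k A} {d : ℤ} {u v : ι → A} (h : IsFrame ℬ d u v) :
    IsFrame ℬ (-d) v u :=
  ⟨h.dual_mem, fun i => (neg_neg d).symm ▸ h.mem i, by simpa only [mul_comm] using h.sum_mul⟩

lemma sum_smul_derivation_swap (D : Derivation k A M) {u v : ι → A} (h : ∑ i, v i * u i = 1) :
    ∑ i, u i • D (v i) = -∑ i, v i • D (u i) := by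
  rw [eq_neg_iff_add_eq_zero, add_comm, ← Finset.sum_add_distrib]
  simpa only [map_sum, D.leibniz, D.map_one_eq_zero] using congrArg D h

lemma smul_derivation_eq_of_sum_mul (D : Derivation k A M) {u v : ι → A}
    (h : ∑ i, v i * u i = 1) (a a' : A) :
    a • D a' = (a * a') • ∑ i, v i • D (u i) + ∑ i, (a * u i) • D (a' * v i) := by
  have expand : D a' = ∑ i, ((a' * v i) • D (u i) + u i • D (a' * v i)) := by
    simp_rw [← D.leibniz, ← map_sum, mul_assoc, ← Finset.mul_sum, h, mul_one]
  simp only [expand, Finset.smul_sum, Finset.sum_add_distrib, smul_add, smul_smul, mul_assoc]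

lemma smul_derivation_sub_mem_add {ℬ : ℤ → Submodule k A} [SetLike.GradedMonoid ℬ]
    (D : Derivation k A M) {H : Submodule k M} {d n c : ℤ} {u v : ι → A} (h : IsFrame ℬ d u v)
    {ω : M} (hH : ∀ a ∈ ℬ (-n), ∀ a' ∈ ℬ n, a • D a' - c • (a * a') • ω ∈ H)
    {a a' : A} (ha : a ∈ ℬ (-(n + d))) (ha' : a' ∈ ℬ (n + d)) :
    a • D a' - (a * a') • ∑ i, v i • D (u i) - c • (a * a') • ω ∈ H := by
  have key : a • D a' - (a * a') • ∑ i, v i • D (u i) - c • (a * a') • ω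
      = ∑ i, ((a * u i) • D (a' * v i) - c • (a * u i * (a' * v i)) • ω) := by
    have coeff : ∑ i, a * u i * (a' * v i) = a * a' := by
      rw [← mul_one (a * a'), ← h.sum_mul, Finset.mul_sum]
      exact Finset.sum_congr rfl fun i _ => by ring
    rw [smul_derivation_eq_of_sum_mul D h.sum_mul, add_sub_cancel_left, Finset.sum_sub_distrib,
      ← Finset.smul_sum, ← Finset.sum_smul, coeff]
  rw [key]
  refine Submodule.sum_mem _ fun i _ => hH _ ?_ _ ?_
  · simpa using SetLike.mul_mem_graded ha (h.mem i)
  · simpa using SetLike.mul_mem_graded ha' (h.dual_mem i)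

theorem smul_derivation_sub_mem {ℬ : ℤ → Submodule k A} [SetLike.GradedMonoid ℬ]
    (D : Derivation k A M) {H : Submodule k M} {u v : ι → A} (h : IsFrame ℬ 1 u v)
    (hH : ∀ b ∈ ℬ 0, ∀ b' ∈ ℬ 0, b • D b' ∈ H) (n : ℤ) :
    ∀ a ∈ ℬ (-n), ∀ a' ∈ ℬ n, a • D a' - n • (a * a') • ∑ i, v i • D (u i) ∈ H := by
  induction n using Int.induction_on with
  | zero => simpa using hH
  | succ n ih =>
    intro a ha a' ha'
    have step := smul_derivation_sub_mem_add D h ih ha ha'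
    rwa [sub_sub, ← one_add_zsmul, add_comm] at step
  | pred n ih =>
    intro a ha a' ha'
    have step := smul_derivation_sub_mem_add D h.symm ih ha ha'
    rwa [sum_smul_derivation_swap D h.sum_mul, sub_sub, smul_neg, ← neg_one_zsmul, ← add_zsmul,
      neg_add_eq_sub] at step

end VerticalPart

open scoped KaehlerDifferential

section Forms

variable {k A : Type*} [CommRing k] [CommRing A] [Algebra k A]

/-- The map `a ⊗ a' ↦ a ⊗ a' - m (a ⊗ a') ⊗ 1`, sending a tensor to the representative of the
`1`-form `a da'` in the kernel of the multiplication `m`. -/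
def toForm (m : A ⊗[k] A →ₗ[k] A) : A ⊗[k] A →ₗ[k] A ⊗[k] A :=
  .id - (TensorProduct.mk k A A).flip 1 ∘ₗ m

/-- The span of the tensors `b ⊗ b'` with `b` and `b'` in `S`. -/
def tensorSquare (S : Submodule k A) : Submodule k (A ⊗[k] A) :=
  Submodule.map₂ (TensorProduct.mk k A A) S S

lemma toForm_apply (m : A ⊗[k] A →ₗ[k] A) (x : A ⊗[k] A) : toForm m x = x - m x ⊗ₜ[k] 1 := rfl

lemma toForm_of_mem_ker {m : A ⊗[k] A →ₗ[k] A} {x : A ⊗[k] A} (hx : x ∈ LinearMap.ker m) :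
    toForm m x = x := by
  rw [toForm_apply, LinearMap.mem_ker.mp hx, TensorProduct.zero_tmul, sub_zero]

lemma toForm_mem_ker {m : A ⊗[k] A →ₗ[k] A} (hm : ∀ a, m (a ⊗ₜ 1) = a) (x : A ⊗[k] A) :
    toForm m x ∈ LinearMap.ker m := by
  rw [LinearMap.mem_ker, toForm_apply, map_sub, hm, sub_self]

lemma map₂_eq_span_setOf {V : Type*} [AddCommGroup V] [Module k V] (f : V →ₗ[k] V →ₗ[k] V)
    (S T : Submodule k V) :
    Submodule.map₂ f S T = Submodule.span k {z | ∃ x ∈ S, ∃ y ∈ T, z = f x y} := by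
  rw [Submodule.map₂_eq_span_image2]
  congr 1
  ext z
  simp only [Set.mem_image2, SetLike.mem_coe, Set.mem_ofPred_eq, eq_comm]

lemma map_toForm_tensorSquare (m : A ⊗[k] A →ₗ[k] A) (S : Submodule k A) :
    (tensorSquare S).map (toForm m) = Submodule.span k
      {y | ∃ b ∈ S, ∃ b' ∈ S, y = b ⊗ₜ[k] b' - m (b ⊗ₜ[k] b') ⊗ₜ[k] (1 : A)} := by
  rw [tensorSquare, Submodule.map₂_eq_span_image2, Submodule.map_span]
  congr 1
  ext y
  simp [Set.mem_image2, toForm_apply, eq_comm, and_assoc]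

lemma toForm_mul_mem_ideal (x : A ⊗[k] A) :
    toForm (LinearMap.mul' k A) x ∈ KaehlerDifferential.ideal k A :=
  toForm_mem_ker (m := LinearMap.mul' k A) (fun a => by simp) x

lemma tensorProductTo_D_eq_toCotangent (x : A ⊗[k] A) :
    (KaehlerDifferential.D k A).tensorProductTo x
      = (KaehlerDifferential.ideal k A).toCotangent ⟨_, toForm_mul_mem_ideal x⟩ := by
  rw [← KaehlerDifferential.D_tensorProductTo]
  simp [toForm_apply, Derivation.tensorProductTo_tmul]

variable (k A) in
lemma ker_mul'_mul_self : LinearMap.ker (LinearMap.mul' k A) * LinearMap.ker (LinearMap.mul' k A)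
    = (KaehlerDifferential.ideal k A ^ 2).restrictScalars k := by
  refine le_antisymm (Submodule.mul_le.mpr fun x hx y hy => ?_) fun x hx => ?_
  · exact (pow_two (KaehlerDifferential.ideal k A)).symm ▸ Ideal.mul_mem_mul hx hy
  · rw [Submodule.restrictScalars_mem, pow_two] at hx
    exact Submodule.mul_induction_on hx (fun _ hx _ hy => Submodule.mul_mem_mul hx hy)
      fun _ _ => add_mem

variable (k A) in
/-- The inclusion of the Kähler differentials `I ⧸ I²` into `(A ⊗ A) ⧸ I²`, where `I` is the kernel
of the multiplication. -/
def kaehlerInclusion : Ω[A⁄k] →ₗ[k] (A ⊗[k] A) ⧸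
    (LinearMap.ker (LinearMap.mul' k A) * LinearMap.ker (LinearMap.mul' k A)) :=
  (Submodule.quotEquivOfEq _ _ (ker_mul'_mul_self k A)).symm.toLinearMap ∘ₗ
    (Submodule.Quotient.restrictScalarsEquiv k
      (KaehlerDifferential.ideal k A ^ 2)).symm.toLinearMap ∘ₗ
      (KaehlerDifferential.ideal k A).cotangentToQuotientSquare.restrictScalars k

lemma kaehlerInclusion_tensorProductTo (x : A ⊗[k] A) :
    kaehlerInclusion k A ((KaehlerDifferential.D k A).tensorProductTo x)
      = Submodule.mkQ _ (toForm (LinearMap.mul' k A) x) := by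
  rw [tensorProductTo_D_eq_toCotangent]
  rfl

variable (k A) in
lemma kaehlerInclusion_injective : Function.Injective (kaehlerInclusion k A) := by
  refine (injective_iff_map_eq_zero _).mpr fun w hw => ?_
  obtain ⟨x, rfl⟩ := KaehlerDifferential.tensorProductTo_surjective k A w
  rw [kaehlerInclusion_tensorProductTo, Submodule.mkQ_apply, Submodule.Quotient.mk_eq_zero,
    ker_mul'_mul_self] at hw
  rw [tensorProductTo_D_eq_toCotangent]
  exact (Ideal.toCotangent_eq_zero _ _).mpr hw

end Forms

section Connections

variable {k V W : Type*} [CommRing k] [AddCommGroup V] [Module k V] [AddCommGroup W] [Module k W]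

lemma setOf_mkQ_eq_of_le {N K T H : Submodule k V} {v : V →ₗ[k] W} {ω : V} {c : W}
    (hK : ω ∈ K) (hT : ω ∈ T) (hv : v ω = c) (hH : H ≤ K ⊓ T ⊓ LinearMap.ker v)
    (hN : K ⊓ T ⊓ LinearMap.ker v ≤ N ⊔ H) :
    {w | ∃ x, x ∈ K ∧ x ∈ T ∧ v x = c ∧ w = N.mkQ x} = {w | ∃ x ∈ H, w = N.mkQ (ω + x)} := by
  ext w
  constructor
  · rintro ⟨x, hxK, hxT, hxv, rfl⟩
    have hx : x - ω ∈ K ⊓ T ⊓ LinearMap.ker v :=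
      ⟨⟨sub_mem hxK hK, sub_mem hxT hT⟩, by simp [hxv, hv]⟩
    obtain ⟨y, hy, z, hz, hyz⟩ := Submodule.mem_sup.mp (hN hx)
    refine ⟨z, hz, ?_⟩
    rw [← sub_eq_zero, ← map_sub, Submodule.mkQ_apply, Submodule.Quotient.mk_eq_zero, ← sub_sub,
      ← hyz, add_sub_cancel_right]
    exact hy
  · rintro ⟨x, hx, rfl⟩
    obtain ⟨⟨hxK, hxT⟩, hxv⟩ := hH hx
    exact ⟨_, add_mem hK hxK, add_mem hT hxT,
      by rw [map_add, hv, LinearMap.mem_ker.mp hxv, add_zero], rfl⟩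

end Connections

section Classical

variable {A : Type} [CommRing A] [Algebra ℂ A] {𝒜 : ℤ × ℤ → Submodule ℂ A}

lemma mem_totalDeg {p : ℤ × ℤ} {a : A} (ha : a ∈ 𝒜 p) : a ∈ totalDeg 𝒜 (p.1 + p.2) :=
  Submodule.mem_iSup_of_mem p (Submodule.mem_iSup_of_mem rfl ha)

lemma tmul_mem_tensorDeg {p q : ℤ × ℤ} {a a' : A} (ha : a ∈ 𝒜 p) (ha' : a' ∈ 𝒜 q) :
    a ⊗ₜ[ℂ] a' ∈ tensorDeg 𝒜 (p + q) :=
  Submodule.subset_span ⟨p, q, a, ha, a', ha', rfl, rfl⟩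

lemma tensorDeg_le {r : ℤ × ℤ} {P : Submodule ℂ (A ⊗[ℂ] A)}
    (h : ∀ p q, p + q = r → ∀ a ∈ 𝒜 p, ∀ a' ∈ 𝒜 q, a ⊗ₜ[ℂ] a' ∈ P) : tensorDeg 𝒜 r ≤ P := by
  refine Submodule.span_le.mpr ?_
  rintro _ ⟨p, q, a, ha, a', ha', hpq, rfl⟩
  exact h p q hpq a ha a' ha'

lemma tensorDeg_le_tensorTotalDeg (p : ℤ × ℤ) : tensorDeg 𝒜 p ≤ tensorTotalDeg 𝒜 (p.1 + p.2) :=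
  le_iSup₂_of_le p rfl le_rfl

lemma tensorSquare_totalDeg_zero_le :
    tensorSquare (totalDeg 𝒜 0) ≤ tensorTotalDeg 𝒜 0 := by
  simp only [tensorSquare, totalDeg, Submodule.map₂_iSup_left, Submodule.map₂_iSup_right,
    iSup_le_iff, Submodule.map₂_le]
  intro q hq p hp a ha a' ha'
  have h : (p + q).1 + (p + q).2 = 0 := by simp only [Prod.fst_add, Prod.snd_add]; lia
  exact h ▸ tensorDeg_le_tensorTotalDeg _ (tmul_mem_tensorDeg ha ha')

lemma toForm_mem_tensorDeg [SetLike.GradedOne 𝒜] {m : A ⊗[ℂ] A →ₗ[ℂ] A}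
    (hm : ∀ p q, ∀ a ∈ 𝒜 p, ∀ a' ∈ 𝒜 q, m (a ⊗ₜ a') ∈ 𝒜 (p + q)) {p : ℤ × ℤ} {x : A ⊗[ℂ] A}
    (hx : x ∈ tensorDeg 𝒜 p) : toForm m x ∈ tensorDeg 𝒜 p := by
  suffices tensorDeg 𝒜 p ≤ (tensorDeg 𝒜 p).comap (toForm m) from this hx
  refine tensorDeg_le fun q r hqr a ha a' ha' => ?_
  subst hqr
  refine sub_mem (tmul_mem_tensorDeg ha ha') ?_
  simpa using tmul_mem_tensorDeg (hm q r a ha a' ha') (SetLike.one_mem_graded 𝒜)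

lemma toForm_mul_mem_tensorDeg [SetLike.GradedMonoid 𝒜] {p : ℤ × ℤ} {x : A ⊗[ℂ] A}
    (hx : x ∈ tensorDeg 𝒜 p) : toForm (LinearMap.mul' ℂ A) x ∈ tensorDeg 𝒜 p :=
  toForm_mem_tensorDeg (fun _ _ _ ha _ ha' => SetLike.mul_mem_graded ha ha') hx

lemma toForm_mul_mem_tensorTotalDeg [SetLike.GradedMonoid 𝒜] {n : ℤ} {x : A ⊗[ℂ] A}
    (hx : x ∈ tensorTotalDeg 𝒜 n) : toForm (LinearMap.mul' ℂ A) x ∈ tensorTotalDeg 𝒜 n := by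
  suffices tensorTotalDeg 𝒜 n ≤ (tensorTotalDeg 𝒜 n).comap (toForm (LinearMap.mul' ℂ A)) from
    this hx
  refine iSup₂_le fun p hp x hx => ?_
  exact hp ▸ tensorDeg_le_tensorTotalDeg p (toForm_mul_mem_tensorDeg hx)

variable (𝒜) in
/-- The Euler operator of the grading `𝒜`, multiplying elements of total degree `n` by `n`. -/
def IsEulerOperator (E : A →ₗ[ℂ] A) : Prop :=
  ∀ p : ℤ × ℤ, ∀ a ∈ 𝒜 p, E a = ((p.1 + p.2 : ℤ) : ℂ) • a

/-- The vertical lift `a ⊗ a' ↦ m (a ⊗ E a')` determined by a multiplication `m` and the Euler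
operator `E`. -/
def verticalLift (m : A ⊗[ℂ] A →ₗ[ℂ] A) (E : A →ₗ[ℂ] A) : A ⊗[ℂ] A →ₗ[ℂ] A :=
  m ∘ₗ TensorProduct.map .id E

variable {E : A →ₗ[ℂ] A} (hE : IsEulerOperator 𝒜 E)
include hE

lemma euler_of_mem_totalDeg {n : ℤ} {a : A} (ha : a ∈ totalDeg 𝒜 n) : E a = (n : ℂ) • a := by
  suffices totalDeg 𝒜 n ≤ LinearMap.eqLocus E ((n : ℂ) • .id) from this ha
  refine iSup₂_le fun p hp a ha => ?_
  rw [LinearMap.mem_eqLocus, hE p a ha, hp]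
  rfl

lemma verticalLift_toForm [SetLike.GradedOne 𝒜] (m : A ⊗[ℂ] A →ₗ[ℂ] A) (x : A ⊗[ℂ] A) :
    verticalLift m E (toForm m x) = verticalLift m E x := by
  have hE1 : E 1 = 0 := by simpa using hE 0 1 (SetLike.one_mem_graded 𝒜)
  simp [verticalLift, toForm_apply, hE1]

theorem map_toForm_mul_le_ker_verticalLift [SetLike.GradedMonoid 𝒜] :
    (tensorSquare (totalDeg 𝒜 0)).map (toForm (LinearMap.mul' ℂ A))
      ≤ LinearMap.ker (LinearMap.mul' ℂ A) ⊓ tensorTotalDeg 𝒜 0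
        ⊓ LinearMap.ker (verticalLift (LinearMap.mul' ℂ A) E) := by
  rw [Submodule.map_le_iff_le_comap]
  refine fun x hx => ⟨⟨toForm_mem_ker (by simp) x,
    toForm_mul_mem_tensorTotalDeg (tensorSquare_totalDeg_zero_le hx)⟩, ?_⟩
  suffices tensorSquare (totalDeg 𝒜 0)
      ≤ LinearMap.ker (verticalLift (LinearMap.mul' ℂ A) E) from
    (verticalLift_toForm hE _ x).trans (this hx)
  refine Submodule.map₂_le.mpr fun b _ b' hb' => ?_
  simp [verticalLift, euler_of_mem_totalDeg hE hb']

lemma verticalLift_tmul {p : ℤ × ℤ} (hp : p.1 + p.2 = 1) (m : A ⊗[ℂ] A →ₗ[ℂ] A) (a : A) {a' : A}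
    (ha' : a' ∈ 𝒜 p) : verticalLift m E (a ⊗ₜ a') = m (a ⊗ₜ a') := by
  simp [verticalLift, hE p a' ha', hp]

theorem sum_toForm_isConnection {ι : Type*} [Fintype ι] [SetLike.GradedOne 𝒜]
    {m : A ⊗[ℂ] A →ₗ[ℂ] A} (hm_one : ∀ a, m (a ⊗ₜ 1) = a)
    (hm : ∀ p q, ∀ a ∈ 𝒜 p, ∀ a' ∈ 𝒜 q, m (a ⊗ₜ a') ∈ 𝒜 (p + q)) {p : ι → ℤ × ℤ}
    (hp : ∀ i, (p i).1 + (p i).2 = 1) {z zs : ι → A} (hz : ∀ i, z i ∈ 𝒜 (p i))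
    (hzs : ∀ i, zs i ∈ 𝒜 (-p i)) (hrel : ∑ i, m (zs i ⊗ₜ z i) = 1) :
    ∑ i, toForm m (zs i ⊗ₜ z i) ∈ LinearMap.ker m ∧
      ∑ i, toForm m (zs i ⊗ₜ z i) ∈ tensorDeg 𝒜 (0, 0) ∧
      verticalLift m E (∑ i, toForm m (zs i ⊗ₜ z i)) = 1 := by
  refine ⟨sum_mem fun i _ => toForm_mem_ker hm_one _, sum_mem fun i _ => ?_, ?_⟩
  · refine toForm_mem_tensorDeg hm ?_
    have := tmul_mem_tensorDeg (hzs i) (hz i)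
    rwa [neg_add_cancel] at this
  · simp only [map_sum, verticalLift_toForm hE, verticalLift_tmul hE (hp _) m _ (hz _), hrel]

variable {ι : Type*} [Fintype ι] {u v : ι → A}

lemma tensorProductTo_sub_mem [GradedAlgebra 𝒜] {M : Type*} [AddCommGroup M] [Module ℂ M]
    [Module A M] [IsScalarTower ℂ A M] (h : IsFrame (totalDeg 𝒜) 1 u v) (D : Derivation ℂ A M)
    {H : Submodule ℂ M} (hH : ∀ b ∈ totalDeg 𝒜 0, ∀ b' ∈ totalDeg 𝒜 0, b • D b' ∈ H)
    {x : A ⊗[ℂ] A} (hx : x ∈ tensorTotalDeg 𝒜 0) :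
    D.tensorProductTo x - verticalLift (LinearMap.mul' ℂ A) E x • ∑ i, v i • D (u i) ∈ H := by
  suffices tensorTotalDeg 𝒜 0 ≤ H.comap (D.tensorProductTo.restrictScalars ℂ
      - (LinearMap.toSpanSingleton A M (∑ i, v i • D (u i))).restrictScalars ℂ
        ∘ₗ verticalLift (LinearMap.mul' ℂ A) E) from this hx
  refine iSup₂_le fun p hp => tensorDeg_le fun q r hqr a ha a' ha' => ?_
  subst hqr
  have hq : q.1 + q.2 = -(r.1 + r.2) := by
    simp only [Prod.fst_add, Prod.snd_add] at hp
    lia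
  have reduced := smul_derivation_sub_mem D h hH (r.1 + r.2) a (hq ▸ mem_totalDeg ha) a'
    (mem_totalDeg ha')
  simpa [verticalLift, Derivation.tensorProductTo_tmul, hE r a' ha', smul_assoc,
    ← Int.cast_smul_eq_zsmul ℂ] using reduced

theorem ker_verticalLift_mul_le_sup [GradedAlgebra 𝒜] (h : IsFrame (totalDeg 𝒜) 1 u v) :
    LinearMap.ker (LinearMap.mul' ℂ A) ⊓ tensorTotalDeg 𝒜 0
        ⊓ LinearMap.ker (verticalLift (LinearMap.mul' ℂ A) E)
      ≤ LinearMap.ker (LinearMap.mul' ℂ A) * LinearMap.ker (LinearMap.mul' ℂ A)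
        ⊔ (tensorSquare (totalDeg 𝒜 0)).map (toForm (LinearMap.mul' ℂ A)) := by
  rintro x ⟨⟨hxK, hxT⟩, hxv⟩
  have horizontal := tensorProductTo_sub_mem hE h (KaehlerDifferential.D ℂ A)
    (H := (tensorSquare (totalDeg 𝒜 0)).map
      ((KaehlerDifferential.D ℂ A).tensorProductTo.restrictScalars ℂ))
    (fun b hb b' hb' => ⟨b ⊗ₜ b', Submodule.apply_mem_map₂ _ hb hb',
      Derivation.tensorProductTo_tmul _ _ _⟩) hxT
  rw [LinearMap.mem_ker.mp hxv, zero_smul, sub_zero] at horizontal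
  obtain ⟨y, hy, hyx⟩ := horizontal
  have hmk := congrArg (kaehlerInclusion ℂ A) hyx
  rw [LinearMap.restrictScalars_apply, kaehlerInclusion_tensorProductTo,
    kaehlerInclusion_tensorProductTo, toForm_of_mem_ker hxK] at hmk
  rw [← Submodule.comap_map_mkQ, Submodule.mem_comap, ← hmk]
  exact Submodule.mem_map_of_mem (Submodule.mem_map_of_mem hy)

end Classical

section HorizontalDerivation

variable {k A M ι : Type*} [CommRing k] [CommRing A] [Algebra k A] [AddCommGroup M] [Module k M]
  [Module A M] {ℬ : ℤ → Submodule k A}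

/-- The Leibniz rule for products of elements of degrees `m` and `n`, where the linear maps `g`, `h`
and `f` play the role of the derivation in degrees `m`, `n` and `m + n`. -/
def LeibnizRule (ℬ : ℤ → Submodule k A) (m n : ℤ) (f g h : A →ₗ[k] M) : Prop :=
  ∀ a ∈ ℬ m, ∀ b ∈ ℬ n, f (a * b) = a • h b + b • g a

lemma LeibnizRule.symm {m n : ℤ} {f g h : A →ₗ[k] M} (hL : LeibnizRule ℬ m n f g h) :
    LeibnizRule ℬ n m f h g := fun a ha b hb => by
  rw [mul_comm, hL b hb a ha, add_comm]

variable [Fintype ι] {d : ℤ} {u v : ι → A}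

/-- The matrix `q i j = v i * u j` is idempotent, so differentiating `q = q * q` gives
`tr (q dq) = 2 tr (q dq)`. -/
lemma sum_smul_leibniz_eq_zero [SetLike.GradedMonoid ℬ] (hF : IsFrame ℬ d u v) {δ : A →ₗ[k] M}
    (hδ : LeibnizRule ℬ 0 0 δ δ δ) : ∑ i, ∑ j, (v i * u j) • δ (v j * u i) = 0 := by
  let q (i j : ι) : A := v i * u j
  have mem (i j : ι) : q i j ∈ ℬ 0 := by
    simpa using SetLike.mul_mem_graded (hF.dual_mem i) (hF.mem j)
  have idem (i j : ι) : ∑ l, q i l * q l j = q i j := by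
    rw [← mul_one (q i j), ← hF.sum_mul, Finset.mul_sum]
    exact Finset.sum_congr rfl fun l _ => by simp only [q]; ring
  have expand (i j : ι) : q i j • δ (q j i)
      = ∑ l, (q i j * q j l) • δ (q l i) + ∑ l, (q l i * q i j) • δ (q j l) := by
    rw [← idem j i, map_sum, Finset.smul_sum, ← Finset.sum_add_distrib]
    refine Finset.sum_congr rfl fun l _ => ?_
    rw [hδ _ (mem _ _) _ (mem _ _), smul_add, smul_smul, smul_smul, mul_comm (q l i)]
  have left : ∑ i, ∑ j, ∑ l, (q i j * q j l) • δ (q l i) = ∑ i, ∑ j, q i j • δ (q j i) := by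
    refine Finset.sum_congr rfl fun i _ => ?_
    rw [Finset.sum_comm]
    simp_rw [← Finset.sum_smul, idem]
  have right : ∑ i, ∑ j, ∑ l, (q l i * q i j) • δ (q j l) = ∑ i, ∑ j, q i j • δ (q j i) := by
    rw [Finset.sum_comm, Finset.sum_comm (f := fun i j => q i j • δ (q j i))]
    refine Finset.sum_congr rfl fun j _ => ?_
    rw [Finset.sum_comm]
    simp_rw [← Finset.sum_smul, idem]
  have double := calc ∑ i, ∑ j, q i j • δ (q j i)
      = ∑ i, ∑ j, (∑ l, (q i j * q j l) • δ (q l i) + ∑ l, (q l i * q i j) • δ (q j l)) :=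
        Finset.sum_congr rfl fun i _ => Finset.sum_congr rfl fun j _ => expand i j
    _ = ∑ i, ∑ j, q i j • δ (q j i) + ∑ i, ∑ j, q i j • δ (q j i) := by
        simp only [Finset.sum_add_distrib]
        rw [left, right]
  exact left_eq_add.mp double

variable [IsScalarTower k A M]

/-- The operator `f ↦ (a ↦ ∑ i, x i • f (y i * a))`. For a frame `x`, `y` of degree `d` it turns the
degree-`n` part of a derivation vanishing on `∑ i, y i ⊗ x i` into its degree-`n + d` part. -/
def frameShift (x y : ι → A) (f : A →ₗ[k] M) : A →ₗ[k] M :=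
  ∑ i, Algebra.lsmul k k M (x i) ∘ₗ f ∘ₗ LinearMap.mulLeft k (y i)

lemma frameShift_apply (x y : ι → A) (f : A →ₗ[k] M) (a : A) :
    frameShift x y f a = ∑ i, x i • f (y i * a) := by
  simp [frameShift]

section

variable [SetLike.GradedMonoid ℬ]

lemma LeibnizRule.frameShift (hF : IsFrame ℬ d u v) {m n : ℤ} {f g h : A →ₗ[k] M}
    (hL : LeibnizRule ℬ m n f g h) :
    LeibnizRule ℬ (m + d) n (frameShift u v f) (frameShift u v g) h := fun a ha b hb => by
  have mem (i : ι) : v i * a ∈ ℬ m := by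
    simpa using SetLike.mul_mem_graded (hF.dual_mem i) ha
  have coeff : ∑ i, u i * (v i * a) = a := by
    simp_rw [← mul_assoc, ← Finset.sum_mul, mul_comm (u _), hF.sum_mul, one_mul]
  simp only [frameShift_apply, ← mul_assoc (v _), hL _ (mem _) b hb, smul_add, smul_smul,
    Finset.sum_add_distrib, ← Finset.sum_smul, coeff, Finset.smul_sum, mul_comm b]

lemma frameShift_frameShift (hF : IsFrame ℬ d u v) {δ f : A →ₗ[k] M} {n : ℤ}
    (hδ : LeibnizRule ℬ 0 0 δ δ δ) (hf : LeibnizRule ℬ 0 n f δ f) {a : A} (ha : a ∈ ℬ n) :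
    frameShift v u (frameShift u v f) a = f a := by
  have mem (i j : ι) : v j * u i ∈ ℬ 0 := by
    simpa using SetLike.mul_mem_graded (hF.dual_mem j) (hF.mem i)
  have coeff : ∑ i, ∑ j, v i * u j * (v j * u i) = 1 := by
    calc ∑ i, ∑ j, v i * u j * (v j * u i)
        = (∑ i, v i * u i) * ∑ j, v j * u j := by
          rw [Finset.sum_mul_sum]
          exact Finset.sum_congr rfl fun i _ => Finset.sum_congr rfl fun j _ => by ring
      _ = 1 := by rw [hF.sum_mul, one_mul]
  calc frameShift v u (frameShift u v f) a
      = ∑ i, ∑ j, (v i * u j) • f (v j * u i * a) := by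
        simp only [frameShift_apply, Finset.smul_sum, smul_smul, mul_assoc]
    _ = (∑ i, ∑ j, v i * u j * (v j * u i)) • f a
          + a • ∑ i, ∑ j, (v i * u j) • δ (v j * u i) := by
        simp only [hf _ (mem _ _) a ha, smul_add, smul_smul, Finset.sum_add_distrib,
          Finset.sum_smul, Finset.smul_sum, mul_comm a]
    _ = f a := by rw [coeff, one_smul, sum_smul_leibniz_eq_zero hF hδ, smul_zero, add_zero]

lemma exists_graded_family (hF : IsFrame ℬ 1 u v) {δ : A →ₗ[k] M} (hδ : LeibnizRule ℬ 0 0 δ δ δ) :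
    ∃ D : ℤ → A →ₗ[k] M, D 0 = δ ∧
      (∀ n, ∀ a ∈ ℬ (n + 1), D (n + 1) a = frameShift u v (D n) a) ∧
      ∀ n, ∀ a ∈ ℬ (n - 1), D (n - 1) a = frameShift v u (D n) a := by
  have up (n : ℕ) : LeibnizRule ℬ 0 n ((frameShift u v)^[n] δ) δ ((frameShift u v)^[n] δ) := by
    induction n with
    | zero => exact hδ
    | succ n ih =>
      rw [Function.iterate_succ_apply']
      exact_mod_cast (ih.symm.frameShift hF).symm
  have down (n : ℕ) :
      LeibnizRule ℬ 0 (-n) ((frameShift v u)^[n] δ) δ ((frameShift v u)^[n] δ) := by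
    induction n with
    | zero => simpa using hδ
    | succ n ih =>
      rw [Function.iterate_succ_apply']
      simpa [neg_add, add_comm] using (ih.symm.frameShift hF.symm).symm
  have cancel (n : ℕ) : ∀ a ∈ ℬ n,
      frameShift v u ((frameShift u v)^[n + 1] δ) a = (frameShift u v)^[n] δ a := fun a ha => by
    rw [Function.iterate_succ_apply', frameShift_frameShift hF hδ (up n) ha]
  have cancel_neg (n : ℕ) : ∀ a ∈ ℬ (-n),
      frameShift u v ((frameShift v u)^[n + 1] δ) a = (frameShift v u)^[n] δ a := fun a ha => by
    rw [Function.iterate_succ_apply', frameShift_frameShift hF.symm hδ (down n) ha]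
  let D : ℤ → A →ₗ[k] M
    | .ofNat n => (frameShift u v)^[n] δ
    | .negSucc n => (frameShift v u)^[n + 1] δ
  have D_neg : ∀ n : ℕ, D (-n) = (frameShift v u)^[n] δ
    | 0 => rfl
    | _ + 1 => rfl
  refine ⟨D, rfl, fun n a ha => ?_, fun n a ha => ?_⟩
  · rcases n with n | n
    · exact LinearMap.congr_fun (Function.iterate_succ_apply' _ n δ) a
    · have hn : Int.negSucc n + 1 = -n := by lia
      rw [hn] at ha ⊢
      rw [D_neg]
      exact (cancel_neg n a ha).symm
  · rcases n with (_ | n) | n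
    · rfl
    · rw [Int.ofNat_eq_natCast, Nat.cast_succ, add_sub_cancel_right] at ha ⊢
      exact (cancel n a ha).symm
    · exact LinearMap.congr_fun (Function.iterate_succ_apply' _ (n + 1) δ) a

lemma exists_graded_derivation (hF : IsFrame ℬ 1 u v) {δ : A →ₗ[k] M}
    (hδ : LeibnizRule ℬ 0 0 δ δ δ) :
    ∃ D : ℤ → A →ₗ[k] M, D 0 = δ ∧ ∀ m n, LeibnizRule ℬ m n (D (m + n)) (D m) (D n) := by
  obtain ⟨D, rfl, hup, hdown⟩ := exists_graded_family hF hδ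
  have leibniz_up (m n : ℤ) (h : LeibnizRule ℬ m n (D (m + n)) (D m) (D n)) :
      LeibnizRule ℬ (m + 1) n (D (m + 1 + n)) (D (m + 1)) (D n) := fun a ha b hb => by
    have hab : a * b ∈ ℬ (m + n + 1) := by
      simpa [add_right_comm] using SetLike.mul_mem_graded ha hb
    rw [add_right_comm, hup _ _ hab, hup _ _ ha, h.frameShift hF a ha b hb]
  have leibniz_down (m n : ℤ) (h : LeibnizRule ℬ m n (D (m + n)) (D m) (D n)) :
      LeibnizRule ℬ (m - 1) n (D (m - 1 + n)) (D (m - 1)) (D n) := fun a ha b hb => by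
    have hab : a * b ∈ ℬ (m + n - 1) := by
      simpa [sub_add_eq_add_sub] using SetLike.mul_mem_graded ha hb
    rw [sub_add_eq_add_sub, hdown _ _ hab, hdown _ _ ha, h.frameShift hF.symm a ha b hb]
  have of_zero (n : ℤ) (h : LeibnizRule ℬ 0 n (D n) (D 0) (D n)) (m : ℤ) :
      LeibnizRule ℬ m n (D (m + n)) (D m) (D n) := by
    induction m using Int.induction_on with
    | zero => rwa [zero_add]
    | succ m ih => exact leibniz_up _ _ ih
    | pred m ih => exact leibniz_down _ _ ih
  refine ⟨D, rfl, fun m n => of_zero n ?_ m⟩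
  simpa only [add_zero] using (of_zero 0 hδ n).symm

end

/-- Geometrically, a principal `𝔾ₘ`-bundle admits a connection, which lifts vector fields from the
base. -/
theorem exists_derivation_eq_on_zero [GradedAlgebra ℬ] (hF : IsFrame ℬ 1 u v) {δ : A →ₗ[k] M}
    (hδ : LeibnizRule ℬ 0 0 δ δ δ) : ∃ D : Derivation k A M, ∀ b ∈ ℬ 0, D b = δ b := by
  obtain ⟨D, rfl, hD⟩ := exists_graded_derivation hF hδ
  have glue_apply {n : ℤ} {a : A} (ha : a ∈ ℬ n) :
      glue ℬ (fun n => D n ∘ₗ (ℬ n).subtype) a = D n a := glue_of_mem ℬ _ ha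
  refine ⟨.mk' (glue ℬ fun n => D n ∘ₗ (ℬ n).subtype) fun a b => ?_, fun b hb => glue_apply hb⟩
  induction a using DirectSum.Decomposition.inductionOn ℬ with
  | zero => simp
  | add a a' ha ha' => simp only [add_mul, map_add, ha, ha', add_smul, smul_add]; abel
  | homogeneous a =>
    induction b using DirectSum.Decomposition.inductionOn ℬ with
    | zero => simp
    | add b b' hb hb' => simp only [mul_add, map_add, hb, hb', add_smul, smul_add]; abel
    | homogeneous b =>
      rw [glue_apply (SetLike.mul_mem_graded a.2 b.2), glue_apply a.2, glue_apply b.2]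
      exact hD _ _ a a.2 b b.2

end HorizontalDerivation

section BaseDifferentials

variable {k A ι : Type*} [CommRing k] [CommRing A] [Algebra k A] [Fintype ι]
  {ℬ : ℤ → Submodule k A} [GradedAlgebra ℬ] {u v : ι → A} {B : Subalgebra k A}

lemma exists_retraction_degree_zero (hB : Subalgebra.toSubmodule B = ℬ 0) :
    ∃ π : A →ₗ[B] B, ∀ b : B, π b = b := by
  have mem {a : A} : a ∈ B ↔ a ∈ ℬ 0 := by rw [← hB, Subalgebra.mem_toSubmodule]
  refine ⟨⟨⟨fun a => ⟨GradedAlgebra.proj ℬ 0 a, mem.mpr (SetLike.coe_mem _)⟩, fun a a' => ?_⟩,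
    fun b a => ?_⟩, fun b => ?_⟩
  · exact Subtype.ext (map_add _ a a')
  · exact Subtype.ext (DirectSum.coe_decompose_mul_of_left_mem_zero ℬ (mem.mp b.2))
  · exact Subtype.ext (DirectSum.decompose_of_mem_same ℬ (mem.mp b.2))

theorem kaehlerDifferential_map_injective (hF : IsFrame ℬ 1 u v)
    (hB : Subalgebra.toSubmodule B = ℬ 0) :
    Function.Injective (KaehlerDifferential.map k k B A) := by
  obtain ⟨π, hπ⟩ := exists_retraction_degree_zero hB
  let δ : A →ₗ[k] A ⊗[B] Ω[B⁄k] :=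
    (TensorProduct.mk B A Ω[B⁄k] 1).restrictScalars k
      ∘ₗ (KaehlerDifferential.D k B : B →ₗ[k] Ω[B⁄k]) ∘ₗ π.restrictScalars k
  have δ_apply (b : B) : δ b = 1 ⊗ₜ KaehlerDifferential.D k B b := by simp [δ, hπ]
  have hδ : LeibnizRule ℬ 0 0 δ δ δ := fun a ha b hb => by
    rw [← hB] at ha hb
    lift a to B using ha
    lift b to B using hb
    rw [← Subalgebra.coe_mul, δ_apply, δ_apply, δ_apply, Derivation.leibniz, TensorProduct.tmul_add,
      TensorProduct.tmul_smul, TensorProduct.tmul_smul]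
    rfl
  obtain ⟨D, hD⟩ := exists_derivation_eq_on_zero hF hδ
  let ρ : Ω[A⁄k] →ₗ[B] Ω[B⁄k] :=
    (TensorProduct.lid B _).toLinearMap ∘ₗ π.rTensor _ ∘ₗ
      D.liftKaehlerDifferential.restrictScalars B
  have retract : ρ ∘ₗ KaehlerDifferential.map k k B A = .id := by
    refine Derivation.liftKaehlerDifferential_unique _ _ <| Derivation.ext fun b => ?_
    have hDb : D (algebraMap B A b) = 1 ⊗ₜ KaehlerDifferential.D k B b :=
      (hD b (hB ▸ b.2)).trans (δ_apply b)
    have hπ_one : π 1 = 1 := hπ 1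
    change TensorProduct.lid B _ (π.rTensor _ (D.liftKaehlerDifferential
      (KaehlerDifferential.map k k B A (KaehlerDifferential.D k B b)))) = _
    rw [KaehlerDifferential.map_D, Derivation.liftKaehlerDifferential_comp_D, hDb,
      LinearMap.rTensor_tmul, TensorProduct.lid_tmul, hπ_one, one_smul]
    rfl
  exact Function.LeftInverse.injective (g := ρ) (LinearMap.congr_fun retract)

end BaseDifferentials

section BaseEmbedding

variable {k A : Type*} [CommRing k] [CommRing A] [Algebra k A]

/-- The map `Ω[B⁄k] → Ω[A⁄k] ⊆ (A ⊗ A) ⧸ I²` induced by the inclusion of a subalgebra `B` of `A`. -/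
def subalgebraKaehlerInclusion (B : Subalgebra k A) : Ω[B⁄k] →ₗ[k] (A ⊗[k] A) ⧸
    (LinearMap.ker (LinearMap.mul' k A) * LinearMap.ker (LinearMap.mul' k A)) :=
  kaehlerInclusion k A ∘ₗ (KaehlerDifferential.map k k B A).restrictScalars k

lemma subalgebraKaehlerInclusion_tensorProductTo (B : Subalgebra k A) (x : B ⊗[k] B) :
    subalgebraKaehlerInclusion B ((KaehlerDifferential.D k B).tensorProductTo x)
      = Submodule.mkQ _ (toForm (LinearMap.mul' k A)
        (TensorProduct.map B.val.toLinearMap B.val.toLinearMap x)) := by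
  rw [← kaehlerInclusion_tensorProductTo]
  refine congrArg (kaehlerInclusion k A) ?_
  induction x with
  | zero => simp
  | add x y hx hy => simp only [map_add, hx, hy]
  | tmul b b' =>
    rw [Derivation.tensorProductTo_tmul, TensorProduct.map_tmul, Derivation.tensorProductTo_tmul]
    exact ((KaehlerDifferential.map k k B A).map_smul b _).trans
      (congrArg (b • ·) (KaehlerDifferential.map_D k k B A b'))

lemma subalgebraKaehlerInclusion_D (B : Subalgebra k A) (b : B) :
    subalgebraKaehlerInclusion B (KaehlerDifferential.D k B b)
      = Submodule.mkQ _ ((1 : A) ⊗ₜ[k] (b : A) - (b : A) ⊗ₜ[k] (1 : A)) := by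
  simpa [toForm_apply, Derivation.tensorProductTo_tmul] using
    subalgebraKaehlerInclusion_tensorProductTo B (1 ⊗ₜ b)

lemma range_subalgebraKaehlerInclusion (B : Subalgebra k A) :
    LinearMap.range (subalgebraKaehlerInclusion B)
      = ((tensorSquare (Subalgebra.toSubmodule B)).map (toForm (LinearMap.mul' k A))).map
          (Submodule.mkQ _) := by
  have square : tensorSquare (Subalgebra.toSubmodule B)
      = LinearMap.range (TensorProduct.map B.val.toLinearMap B.val.toLinearMap) := by
    rw [TensorProduct.range_map, tensorSquare,
      show LinearMap.range B.val.toLinearMap = Subalgebra.toSubmodule B from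
        Submodule.range_subtype (Subalgebra.toSubmodule B)]
  rw [square]
  ext y
  constructor
  · rintro ⟨w, rfl⟩
    obtain ⟨x, rfl⟩ := KaehlerDifferential.tensorProductTo_surjective k B w
    exact ⟨_, ⟨_, ⟨x, rfl⟩, rfl⟩, (subalgebraKaehlerInclusion_tensorProductTo B x).symm⟩
  · rintro ⟨_, ⟨_, ⟨x, rfl⟩, rfl⟩, rfl⟩
    exact ⟨_, subalgebraKaehlerInclusion_tensorProductTo B x⟩

lemma subalgebraKaehlerInclusion_smul (B : Subalgebra k A) {l : ((A ⊗[k] A) ⧸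
    (LinearMap.ker (LinearMap.mul' k A) * LinearMap.ker (LinearMap.mul' k A))) →ₗ[k] (A ⊗[k] A) ⧸
    (LinearMap.ker (LinearMap.mul' k A) * LinearMap.ker (LinearMap.mul' k A))} {b : B}
    (hl : ∀ x, l (Submodule.mkQ _ x)
      = Submodule.mkQ _ (TensorProduct.map (LinearMap.mulLeft k (b : A)) .id x))
    (w : Ω[B⁄k]) :
    subalgebraKaehlerInclusion B (b • w) = l (subalgebraKaehlerInclusion B w) := by
  obtain ⟨x, rfl⟩ := KaehlerDifferential.tensorProductTo_surjective k B w
  rw [← map_smul, subalgebraKaehlerInclusion_tensorProductTo,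
    subalgebraKaehlerInclusion_tensorProductTo, hl]
  refine congrArg _ ?_
  induction x with
  | zero => simp
  | add x y hx hy => simp only [smul_add, map_add, hx, hy]
  | tmul b₁ b₂ => simp [toForm_apply, TensorProduct.smul_tmul', mul_assoc]

end BaseEmbedding

section Rescaling

variable {k A ι : Type*} [CommRing k] [AddCommGroup A] [Module k A] [DecidableEq ι]

lemma map_span_eq_self {K V : Type*} [Field K] [AddCommGroup V] [Module K V] {f : V →ₗ[K] V}
    {s : Set V} (h : ∀ x ∈ s, ∃ c : K, c ≠ 0 ∧ f x = c • x) :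
    (Submodule.span K s).map f = Submodule.span K s := by
  refine le_antisymm (Submodule.map_span_le f s _ |>.mpr fun x hx => ?_)
    (Submodule.span_le.mpr fun x hx => ?_)
  · obtain ⟨c, -, hc⟩ := h x hx
    exact hc ▸ Submodule.smul_mem _ c (Submodule.subset_span hx)
  · obtain ⟨c, hc0, hc⟩ := h x hx
    exact ⟨c⁻¹ • x, Submodule.smul_mem _ _ (Submodule.subset_span hx), by
      rw [map_smul, hc, inv_smul_smul₀ hc0]⟩

lemma map_map₂_eq_of_iSup {K V κ : Type*} [Field K] [AddCommGroup V] [Module K V]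
    {f g : V →ₗ[K] V →ₗ[K] V} {ψ : V →ₗ[K] V} {P : κ → Submodule K V} {c : κ → κ → K}
    (hc : ∀ i j, c i j ≠ 0)
    (h : ∀ i j, ∀ x ∈ P i, ∀ y ∈ P j, g (ψ x) (ψ y) = c i j • ψ (f x y)) :
    (Submodule.map₂ f (⨆ i, P i) (⨆ i, P i)).map ψ
      = Submodule.map₂ g ((⨆ i, P i).map ψ) ((⨆ i, P i).map ψ) := by
  simp only [Submodule.map_iSup, Submodule.map₂_iSup_left, Submodule.map₂_iSup_right]
  refine iSup_congr fun j => iSup_congr fun i => le_antisymm ?_ ?_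
  · rw [Submodule.map_le_iff_le_comap, Submodule.map₂_le]
    intro x hx y hy
    rw [Submodule.mem_comap, ← inv_smul_smul₀ (hc i j) (ψ (f x y)), ← h i j x hx y hy]
    exact Submodule.smul_mem _ _ (Submodule.apply_mem_map₂ _ (Submodule.mem_map_of_mem hx)
      (Submodule.mem_map_of_mem hy))
  · rw [Submodule.map₂_le]
    rintro _ ⟨x, hx, rfl⟩ _ ⟨y, hy, rfl⟩
    rw [h i j x hx y hy]
    exact Submodule.smul_mem _ _ (Submodule.mem_map_of_mem (Submodule.apply_mem_map₂ _ hx hy))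

lemma tensor_hom_ext (ℳ : ι → Submodule k A) [DirectSum.Decomposition ℳ] {N : Type*}
    [AddCommGroup N] [Module k N] {f g : A ⊗[k] A →ₗ[k] N}
    (h : ∀ p q, ∀ a ∈ ℳ p, ∀ a' ∈ ℳ q, f (a ⊗ₜ a') = g (a ⊗ₜ a')) : f = g :=
  TensorProduct.ext <| DirectSum.decompose_lhom_ext ℳ fun p => LinearMap.ext fun a =>
    DirectSum.decompose_lhom_ext ℳ fun q => LinearMap.ext fun a' => h p q a a.2 a' a'.2

/-- The endomorphism of `A ⊗ A` multiplying `a ⊗ a'` by `c p q` for `a` of degree `p` and `a'` of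
degree `q`. -/
def rescale (ℳ : ι → Submodule k A) [DirectSum.Decomposition ℳ] (c : ι → ι → k) :
    A ⊗[k] A →ₗ[k] A ⊗[k] A :=
  TensorProduct.lift <| glue ℳ fun p =>
    (TensorProduct.mk k A A).compl₂ (glue ℳ fun q => c p q • (ℳ q).subtype) ∘ₗ (ℳ p).subtype

lemma rescale_tmul (ℳ : ι → Submodule k A) [DirectSum.Decomposition ℳ] (c : ι → ι → k) {p q : ι}
    {a a' : A} (ha : a ∈ ℳ p) (ha' : a' ∈ ℳ q) :
    rescale ℳ c (a ⊗ₜ a') = c p q • (a ⊗ₜ a') := by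
  simp [rescale, glue_of_mem ℳ _ ha, glue_of_mem ℳ _ ha']

lemma rescale_comp_rescale (ℳ : ι → Submodule k A) [DirectSum.Decomposition ℳ] {c c' : ι → ι → k}
    (h : ∀ p q, c p q * c' p q = 1) : rescale ℳ c ∘ₗ rescale ℳ c' = .id :=
  tensor_hom_ext ℳ fun p q a ha a' ha' => by
    rw [LinearMap.comp_apply, rescale_tmul ℳ _ ha ha', map_smul, rescale_tmul ℳ _ ha ha', smul_smul,
      mul_comm, h, one_smul, LinearMap.id_apply]

end Rescaling

section Phases

variable (θ : ℝ) (p q r : ℤ × ℤ)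

lemma phase_ne_zero : phase θ p q ≠ 0 := Complex.exp_ne_zero _

lemma phase_add_left : phase θ (p + q) r = phase θ p r * phase θ q r := by
  unfold phase
  rw [← Complex.exp_add]
  congr 1
  push_cast [Prod.fst_add, Prod.snd_add]
  ring

lemma phase_swap : phase θ q p = (phase θ p q)⁻¹ := by
  unfold phase
  rw [← Complex.exp_neg]
  congr 1
  push_cast
  ring

lemma phase_add_right : phase θ p (q + r) = phase θ p q * phase θ p r := by
  rw [phase_swap, phase_add_left, mul_inv, ← phase_swap, ← phase_swap]

lemma phase_mul_phase_swap : phase θ p q * phase θ q p = 1 := by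
  rw [phase_swap θ p q, mul_inv_cancel₀ (phase_ne_zero θ p q)]

lemma phase_neg_self : phase θ (-p) p = 1 := by simp [phase, mul_comm]

lemma phase_zero_right : phase θ p 0 = 1 := by simp [phase]

lemma rphase_eq_phase_sq : rphase θ p q = phase θ q p ^ 2 := by
  unfold phase rphase
  rw [← Complex.exp_nat_mul]
  congr 1
  push_cast
  ring

end Phases

section Deformation

variable {A : Type} [CommRing A] [Algebra ℂ A] (𝒜 : ℤ × ℤ → Submodule ℂ A) (θ : ℝ)

/-- The bilinear map `stp` is the star product `⋆_θ` of the grading `𝒜`. -/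
def IsStarProduct (stp : A →ₗ[ℂ] A →ₗ[ℂ] A) : Prop :=
  ∀ p q : ℤ × ℤ, ∀ a ∈ 𝒜 p, ∀ a' ∈ 𝒜 q, stp a a' = phase θ p q • (a * a')

/-- The bilinear map `bmul` is the braided product of `A_θ ⊗ A_θ`, where `stp` is the product of
`A_θ`. -/
def IsBraidedProduct (stp : A →ₗ[ℂ] A →ₗ[ℂ] A)
    (bmul : A ⊗[ℂ] A →ₗ[ℂ] A ⊗[ℂ] A →ₗ[ℂ] A ⊗[ℂ] A) : Prop :=
  ∀ p p' u u' : ℤ × ℤ, ∀ a ∈ 𝒜 p, ∀ a' ∈ 𝒜 p', ∀ c ∈ 𝒜 u, ∀ c' ∈ 𝒜 u',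
    bmul (a ⊗ₜ[ℂ] a') (c ⊗ₜ[ℂ] c') = rphase θ u p' • (stp a c ⊗ₜ[ℂ] stp a' c')

variable {𝒜 θ}

lemma iSup_tensorDeg [DirectSum.Decomposition 𝒜] : ⨆ p, tensorDeg 𝒜 p = ⊤ := by
  rw [eq_top_iff, ← TensorProduct.map₂_mk_top_top_eq_top,
    ← (DirectSum.Decomposition.isInternal 𝒜).submodule_iSup_eq_top]
  simp only [Submodule.map₂_iSup_left, Submodule.map₂_iSup_right, iSup_le_iff, Submodule.map₂_le]
  exact fun q p a ha a' ha' => Submodule.mem_iSup_of_mem (p + q) (tmul_mem_tensorDeg ha ha')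

lemma ker_mul'_eq_iSup [GradedAlgebra 𝒜] : LinearMap.ker (LinearMap.mul' ℂ A)
    = ⨆ p, LinearMap.ker (LinearMap.mul' ℂ A) ⊓ tensorDeg 𝒜 p := by
  refine le_antisymm (fun x hx => ?_) (iSup_le fun p => inf_le_left)
  have graded : ⨆ p, tensorDeg 𝒜 p ≤ (⨆ p, LinearMap.ker (LinearMap.mul' ℂ A)
      ⊓ tensorDeg 𝒜 p).comap (toForm (LinearMap.mul' ℂ A)) :=
    iSup_le fun p y hy => Submodule.mem_iSup_of_mem p
      ⟨toForm_mem_ker (by simp) y, toForm_mul_mem_tensorDeg hy⟩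
  rw [← toForm_of_mem_ker hx]
  exact graded (iSup_tensorDeg (𝒜 := 𝒜) ▸ Submodule.mem_top)

variable [GradedAlgebra 𝒜]

variable (𝒜 θ) in
/-- The automorphism of `A ⊗ A` rescaling `a ⊗ a'` by the inverse of the phase relating `a ⋆_θ a'`
to `a * a'`. It transports the classical differential calculus to the deformed one. -/
def phaseEquiv : A ⊗[ℂ] A ≃ₗ[ℂ] A ⊗[ℂ] A :=
  .ofLinearMap (rescale 𝒜 fun p q => phase θ q p) (rescale 𝒜 (phase θ))
    (rescale_comp_rescale 𝒜 fun p q => phase_mul_phase_swap θ q p)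
    (rescale_comp_rescale 𝒜 (phase_mul_phase_swap θ))

lemma phaseEquiv_tmul {p q : ℤ × ℤ} {a a' : A} (ha : a ∈ 𝒜 p) (ha' : a' ∈ 𝒜 q) :
    phaseEquiv 𝒜 θ (a ⊗ₜ a') = phase θ q p • (a ⊗ₜ a') :=
  rescale_tmul 𝒜 _ ha ha'

lemma phaseEquiv_tmul_one (a : A) : phaseEquiv 𝒜 θ (a ⊗ₜ 1) = a ⊗ₜ 1 := by
  induction a using DirectSum.Decomposition.inductionOn 𝒜 with
  | zero => simp
  | add a a' ha ha' => rw [TensorProduct.add_tmul, map_add, ha, ha']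
  | homogeneous a =>
    rw [phaseEquiv_tmul a.2 (SetLike.one_mem_graded 𝒜), phase_swap, phase_zero_right, inv_one,
      one_smul]

lemma map_phaseEquiv_tensorDeg (p : ℤ × ℤ) :
    (tensorDeg 𝒜 p).map (phaseEquiv 𝒜 θ).toLinearMap = tensorDeg 𝒜 p := by
  refine map_span_eq_self ?_
  rintro _ ⟨q, r, a, ha, a', ha', -, rfl⟩
  exact ⟨_, phase_ne_zero θ r q, phaseEquiv_tmul ha ha'⟩

lemma map_phaseEquiv_tensorTotalDeg (n : ℤ) :
    (tensorTotalDeg 𝒜 n).map (phaseEquiv 𝒜 θ).toLinearMap = tensorTotalDeg 𝒜 n := by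
  simp only [tensorTotalDeg, Submodule.map_iSup, map_phaseEquiv_tensorDeg]

lemma map_phaseEquiv_tensorSquare (n : ℤ) :
    (tensorSquare (totalDeg 𝒜 n)).map (phaseEquiv 𝒜 θ).toLinearMap
      = tensorSquare (totalDeg 𝒜 n) := by
  simp only [tensorSquare, totalDeg, Submodule.map₂_iSup_left, Submodule.map₂_iSup_right,
    Submodule.map_iSup]
  refine iSup_congr fun q => iSup_congr fun _ => iSup_congr fun p => iSup_congr fun _ => ?_
  rw [Submodule.map₂_eq_span_image2]
  refine map_span_eq_self ?_
  rintro _ ⟨a, ha, a', ha', rfl⟩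
  exact ⟨_, phase_ne_zero θ q p, phaseEquiv_tmul ha ha'⟩

section StarProduct

variable {stp : A →ₗ[ℂ] A →ₗ[ℂ] A} (hstp : IsStarProduct 𝒜 θ stp)
include hstp

lemma IsStarProduct.apply_mem {p q : ℤ × ℤ} {a a' : A} (ha : a ∈ 𝒜 p) (ha' : a' ∈ 𝒜 q) :
    stp a a' ∈ 𝒜 (p + q) :=
  hstp p q a ha a' ha' ▸ Submodule.smul_mem _ _ (SetLike.mul_mem_graded ha ha')

lemma IsStarProduct.apply_one (a : A) : stp a 1 = a := by
  suffices stp.flip 1 = .id from LinearMap.congr_fun this a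
  refine DirectSum.decompose_lhom_ext 𝒜 fun p => LinearMap.ext fun a => ?_
  simpa [phase_zero_right] using hstp p 0 a a.2 1 (SetLike.one_mem_graded 𝒜)

lemma lift_comp_phaseEquiv :
    TensorProduct.lift stp ∘ₗ (phaseEquiv 𝒜 θ).toLinearMap = LinearMap.mul' ℂ A :=
  tensor_hom_ext 𝒜 fun p q a ha a' ha' => by
    simp [phaseEquiv_tmul ha ha', hstp p q a ha a' ha', smul_smul, phase_mul_phase_swap]

lemma verticalLift_comp_phaseEquiv {E : A →ₗ[ℂ] A} (hE : IsEulerOperator 𝒜 E) :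
    verticalLift (TensorProduct.lift stp) E ∘ₗ (phaseEquiv 𝒜 θ).toLinearMap
      = verticalLift (LinearMap.mul' ℂ A) E := by
  refine tensor_hom_ext 𝒜 fun p q a ha a' ha' => ?_
  simp only [verticalLift, LinearMap.comp_apply, LinearEquiv.coe_coe, phaseEquiv_tmul ha ha',
    map_smul, TensorProduct.map_tmul, hE q a' ha', LinearMap.id_apply, TensorProduct.tmul_smul,
    TensorProduct.lift.tmul, hstp p q a ha a' ha', LinearMap.mul'_apply, smul_smul]
  rw [mul_left_comm, phase_mul_phase_swap, mul_one]

lemma toForm_comp_phaseEquiv :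
    toForm (TensorProduct.lift stp) ∘ₗ (phaseEquiv 𝒜 θ).toLinearMap
      = (phaseEquiv 𝒜 θ).toLinearMap ∘ₗ toForm (LinearMap.mul' ℂ A) := by
  refine LinearMap.ext fun x => ?_
  have hlift := LinearMap.congr_fun (lift_comp_phaseEquiv hstp) x
  simp only [LinearMap.comp_apply, LinearEquiv.coe_coe] at hlift ⊢
  rw [toForm_apply, toForm_apply, hlift, map_sub, phaseEquiv_tmul_one]

lemma map_phaseEquiv_map_toForm (n : ℤ) :
    ((tensorSquare (totalDeg 𝒜 n)).map (toForm (LinearMap.mul' ℂ A))).map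
        (phaseEquiv 𝒜 θ).toLinearMap
      = (tensorSquare (totalDeg 𝒜 n)).map (toForm (TensorProduct.lift stp)) := by
  rw [← Submodule.map_comp, ← toForm_comp_phaseEquiv hstp, Submodule.map_comp,
    map_phaseEquiv_tensorSquare]

lemma map_phaseEquiv_ker : (LinearMap.ker (LinearMap.mul' ℂ A)).map (phaseEquiv 𝒜 θ).toLinearMap
    = LinearMap.ker (TensorProduct.lift stp) := by
  rw [← lift_comp_phaseEquiv hstp, LinearMap.ker_comp,
    Submodule.map_comap_eq_of_surjective (phaseEquiv 𝒜 θ).surjective]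

lemma map_phaseEquiv_ker_verticalLift {E : A →ₗ[ℂ] A} (hE : IsEulerOperator 𝒜 E) :
    (LinearMap.ker (LinearMap.mul' ℂ A) ⊓ tensorTotalDeg 𝒜 0
        ⊓ LinearMap.ker (verticalLift (LinearMap.mul' ℂ A) E)).map (phaseEquiv 𝒜 θ).toLinearMap
      = LinearMap.ker (TensorProduct.lift stp) ⊓ tensorTotalDeg 𝒜 0
        ⊓ LinearMap.ker (verticalLift (TensorProduct.lift stp) E) := by
  rw [Submodule.map_inf _ (phaseEquiv 𝒜 θ).injective,
    Submodule.map_inf _ (phaseEquiv 𝒜 θ).injective, map_phaseEquiv_ker hstp,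
    map_phaseEquiv_tensorTotalDeg, ← verticalLift_comp_phaseEquiv hstp hE,
    LinearMap.ker_comp, Submodule.map_comap_eq_of_surjective (phaseEquiv 𝒜 θ).surjective]

variable {bmul : A ⊗[ℂ] A →ₗ[ℂ] A ⊗[ℂ] A →ₗ[ℂ] A ⊗[ℂ] A}

lemma braidedProduct_phaseEquiv_tmul (hbmul : IsBraidedProduct 𝒜 θ stp bmul) {p p' u u' : ℤ × ℤ}
    {a a' c c' : A} (ha : a ∈ 𝒜 p) (ha' : a' ∈ 𝒜 p') (hc : c ∈ 𝒜 u) (hc' : c' ∈ 𝒜 u') :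
    bmul (phaseEquiv 𝒜 θ (a ⊗ₜ a')) (phaseEquiv 𝒜 θ (c ⊗ₜ c'))
      = phase θ (p + p') (u + u') • phaseEquiv 𝒜 θ (a ⊗ₜ a' * c ⊗ₜ c') := by
  rw [Algebra.TensorProduct.tmul_mul_tmul,
    phaseEquiv_tmul (SetLike.mul_mem_graded ha hc) (SetLike.mul_mem_graded ha' hc'),
    phaseEquiv_tmul ha ha', phaseEquiv_tmul hc hc']
  simp only [map_smul, LinearMap.smul_apply, hbmul p p' u u' a ha a' ha' c hc c' hc',
    hstp p u a ha c hc, hstp p' u' a' ha' c' hc', TensorProduct.smul_tmul, TensorProduct.tmul_smul,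
    smul_smul]
  congr 1
  simp only [rphase_eq_phase_sq, phase_add_left, phase_add_right, phase_swap θ p u']
  field_simp [phase_ne_zero]

lemma braidedProduct_phaseEquiv (hbmul : IsBraidedProduct 𝒜 θ stp bmul) {p q : ℤ × ℤ}
    {x y : A ⊗[ℂ] A} (hx : x ∈ tensorDeg 𝒜 p) (hy : y ∈ tensorDeg 𝒜 q) :
    bmul (phaseEquiv 𝒜 θ x) (phaseEquiv 𝒜 θ y) = phase θ p q • phaseEquiv 𝒜 θ (x * y) := by
  induction hx, hy using Submodule.span_induction₂ with
  | mem_mem x y hx hy =>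
    obtain ⟨p, p', a, ha, a', ha', rfl, rfl⟩ := hx
    obtain ⟨u, u', c, hc, c', hc', rfl, rfl⟩ := hy
    exact braidedProduct_phaseEquiv_tmul hstp hbmul ha ha' hc hc'
  | zero_left => simp
  | zero_right => simp
  | add_left _ _ _ _ _ _ h h' => simp only [map_add, LinearMap.add_apply, add_mul, h, h', smul_add]
  | add_right _ _ _ _ _ _ h h' => simp only [map_add, mul_add, h, h', smul_add]
  | smul_left r _ _ _ _ h =>
    simp only [map_smul, LinearMap.smul_apply, smul_mul_assoc, h, smul_comm r]
  | smul_right r _ _ _ _ h => simp only [map_smul, mul_smul_comm, h, smul_comm r]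

lemma map_phaseEquiv_ker_mul_ker (hbmul : IsBraidedProduct 𝒜 θ stp bmul) :
    (LinearMap.ker (LinearMap.mul' ℂ A) * LinearMap.ker (LinearMap.mul' ℂ A)).map
        (phaseEquiv 𝒜 θ).toLinearMap
      = Submodule.map₂ bmul (LinearMap.ker (TensorProduct.lift stp))
        (LinearMap.ker (TensorProduct.lift stp)) := by
  rw [← map_phaseEquiv_ker hstp, ker_mul'_eq_iSup (𝒜 := 𝒜), Submodule.mul_eq_map₂]
  refine map_map₂_eq_of_iSup (phase_ne_zero θ) ?_
  rintro p q x ⟨-, hx⟩ y ⟨-, hy⟩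
  exact braidedProduct_phaseEquiv hstp hbmul hx hy

theorem map_toForm_star_le_ker_verticalLift {E : A →ₗ[ℂ] A} (hE : IsEulerOperator 𝒜 E) :
    (tensorSquare (totalDeg 𝒜 0)).map (toForm (TensorProduct.lift stp))
      ≤ LinearMap.ker (TensorProduct.lift stp) ⊓ tensorTotalDeg 𝒜 0
        ⊓ LinearMap.ker (verticalLift (TensorProduct.lift stp) E) := by
  rw [← map_phaseEquiv_map_toForm hstp, ← map_phaseEquiv_ker_verticalLift hstp hE]
  exact Submodule.map_mono (map_toForm_mul_le_ker_verticalLift hE)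

theorem ker_verticalLift_star_le_sup {E : A →ₗ[ℂ] A} (hE : IsEulerOperator 𝒜 E)
    (hbmul : IsBraidedProduct 𝒜 θ stp bmul) {ι : Type*} [Fintype ι] {u v : ι → A}
    (h : IsFrame (totalDeg 𝒜) 1 u v) :
    LinearMap.ker (TensorProduct.lift stp) ⊓ tensorTotalDeg 𝒜 0
        ⊓ LinearMap.ker (verticalLift (TensorProduct.lift stp) E)
      ≤ Submodule.map₂ bmul (LinearMap.ker (TensorProduct.lift stp))
          (LinearMap.ker (TensorProduct.lift stp))
        ⊔ (tensorSquare (totalDeg 𝒜 0)).map (toForm (TensorProduct.lift stp)) := by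
  rw [← map_phaseEquiv_map_toForm hstp, ← map_phaseEquiv_ker_verticalLift hstp hE,
    ← map_phaseEquiv_ker_mul_ker hstp hbmul, ← Submodule.map_sup]
  exact Submodule.map_mono (ker_verticalLift_mul_le_sup hE h)

end StarProduct

end Deformation

section Fibration

variable {A : Type} [CommRing A] [Algebra ℂ A] {𝒜 : ℤ × ℤ → Submodule ℂ A}
  {ι : Type*} [Fintype ι] {p : ι → ℤ × ℤ} {z zs : ι → A}

lemma isFrame_totalDeg (hp : ∀ i, (p i).1 + (p i).2 = 1) (hz : ∀ i, z i ∈ 𝒜 (p i))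
    (hzs : ∀ i, zs i ∈ 𝒜 (-p i)) (hrel : ∑ i, zs i * z i = 1) : IsFrame (totalDeg 𝒜) 1 z zs where
  mem i := hp i ▸ mem_totalDeg (hz i)
  dual_mem i := by
    have h := mem_totalDeg (hzs i)
    rwa [Prod.fst_neg, Prod.snd_neg, ← neg_add, hp i] at h
  sum_mul := hrel

end Fibration

theorem connections_on_classical_and_deformed_hopf_fibrations_general
    {A : Type} [CommRing A] [Algebra ℂ A] {𝒜 : ℤ × ℤ → Submodule ℂ A} [GradedAlgebra 𝒜]
    {ι : Type*} [Fintype ι] {p : ι → ℤ × ℤ} (hp : ∀ i, (p i).1 + (p i).2 = 1)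
    {z zs : ι → A} (hz : ∀ i, z i ∈ 𝒜 (p i)) (hzs : ∀ i, zs i ∈ 𝒜 (-p i))
    (hrel : ∑ i, zs i * z i = 1) {θ : ℝ}
    {stp : A →ₗ[ℂ] A →ₗ[ℂ] A} (hstp : IsStarProduct 𝒜 θ stp)
    {bmul : A ⊗[ℂ] A →ₗ[ℂ] A ⊗[ℂ] A →ₗ[ℂ] A ⊗[ℂ] A} (hbmul : IsBraidedProduct 𝒜 θ stp bmul)
    {Euler : A →ₗ[ℂ] A} (hEuler : IsEulerOperator 𝒜 Euler)
    {Bsub : Subalgebra ℂ A} (hBsub : Bsub.toSubmodule = totalDeg 𝒜 0)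
    {K K2 Kθ K2θ : Submodule ℂ (A ⊗[ℂ] A)} {vrep vθrep : A ⊗[ℂ] A →ₗ[ℂ] A}
    {ωrep ωθrep : A ⊗[ℂ] A} {BdB BdθB : Submodule ℂ (A ⊗[ℂ] A)}
    (hK : K = LinearMap.ker (LinearMap.mul' ℂ A)) (hK2 : K2 = K * K)
    (hKθ : Kθ = LinearMap.ker (TensorProduct.lift stp))
    (hK2θ : K2θ = Submodule.span ℂ {y | ∃ x ∈ Kθ, ∃ x' ∈ Kθ, y = bmul x x'})
    (hv : vrep = LinearMap.mul' ℂ A ∘ₗ TensorProduct.map .id Euler)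
    (hvθ : vθrep = TensorProduct.lift stp ∘ₗ TensorProduct.map .id Euler)
    (hω : ωrep = ∑ i, (zs i ⊗ₜ z i - (zs i * z i) ⊗ₜ 1))
    (hωθ : ωθrep = ∑ i, (stp (zs i) 1 ⊗ₜ z i - stp (zs i) (z i) ⊗ₜ 1))
    (hBdB : BdB = Submodule.span ℂ {y | ∃ b ∈ totalDeg 𝒜 0, ∃ b' ∈ totalDeg 𝒜 0,
      y = b ⊗ₜ[ℂ] b' - (b * b') ⊗ₜ[ℂ] (1 : A)})
    (hBdθB : BdθB = Submodule.span ℂ {y | ∃ b ∈ totalDeg 𝒜 0, ∃ b' ∈ totalDeg 𝒜 0,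
      y = stp b 1 ⊗ₜ[ℂ] b' - stp b b' ⊗ₜ[ℂ] (1 : A)}) :
    (ωrep ∈ K ∧ ωrep ∈ tensorDeg 𝒜 (0, 0) ∧ vrep ωrep = 1) ∧
    ({w : (A ⊗[ℂ] A) ⧸ K2 | ∃ x : A ⊗[ℂ] A,
        x ∈ K ∧ x ∈ tensorTotalDeg 𝒜 0 ∧ vrep x = 1 ∧ w = K2.mkQ x}
      = {w : (A ⊗[ℂ] A) ⧸ K2 | ∃ x ∈ BdB, w = K2.mkQ (ωrep + x)}) ∧
    (∃ e : Ω[Bsub⁄ℂ] →ₗ[ℂ] (A ⊗[ℂ] A) ⧸ K2,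
      Function.Injective e ∧
      LinearMap.range e = Submodule.map K2.mkQ BdB ∧
      (∀ b : Bsub, e (KaehlerDifferential.D ℂ Bsub b)
        = K2.mkQ ((1 : A) ⊗ₜ[ℂ] (b : A) - (b : A) ⊗ₜ[ℂ] (1 : A))) ∧
      (∀ lact : A → ((A ⊗[ℂ] A) ⧸ K2) →ₗ[ℂ] ((A ⊗[ℂ] A) ⧸ K2),
        (∀ (a : A) (x : A ⊗[ℂ] A), lact a (K2.mkQ x)
          = K2.mkQ (TensorProduct.map (LinearMap.mulLeft ℂ a) LinearMap.id x)) →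
        ∀ (b : Bsub) (w : Ω[Bsub⁄ℂ]), e (b • w) = lact (b : A) (e w))) ∧
    (ωθrep ∈ Kθ ∧ ωθrep ∈ tensorDeg 𝒜 (0, 0) ∧ vθrep ωθrep = 1) ∧
    ({w : (A ⊗[ℂ] A) ⧸ K2θ | ∃ x : A ⊗[ℂ] A,
        x ∈ Kθ ∧ x ∈ tensorTotalDeg 𝒜 0 ∧ vθrep x = 1 ∧ w = K2θ.mkQ x}
      = {w : (A ⊗[ℂ] A) ⧸ K2θ | ∃ x ∈ BdθB, w = K2θ.mkQ (ωθrep + x)}) := by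
  rw [← map₂_eq_span_setOf] at hK2θ
  replace hv : vrep = verticalLift (LinearMap.mul' ℂ A) Euler := hv
  replace hvθ : vθrep = verticalLift (TensorProduct.lift stp) Euler := hvθ
  replace hω : ωrep = ∑ i, toForm (LinearMap.mul' ℂ A) (zs i ⊗ₜ z i) := by
    simpa only [toForm_apply, LinearMap.mul'_apply] using hω
  replace hωθ : ωθrep = ∑ i, toForm (TensorProduct.lift stp) (zs i ⊗ₜ z i) := by
    simpa only [toForm_apply, TensorProduct.lift.tmul, hstp.apply_one] using hωθ
  replace hBdB : BdB = (tensorSquare (totalDeg 𝒜 0)).map (toForm (LinearMap.mul' ℂ A)) := by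
    simpa only [map_toForm_tensorSquare, LinearMap.mul'_apply] using hBdB
  replace hBdθB : BdθB = (tensorSquare (totalDeg 𝒜 0)).map (toForm (TensorProduct.lift stp)) := by
    simpa only [map_toForm_tensorSquare, TensorProduct.lift.tmul, hstp.apply_one] using hBdθB
  subst hK hK2 hKθ hK2θ hv hvθ hω hωθ hBdB hBdθB
  have degree_zero : tensorDeg 𝒜 (0, 0) ≤ tensorTotalDeg 𝒜 0 := tensorDeg_le_tensorTotalDeg (0, 0)
  have frame := isFrame_totalDeg hp hz hzs hrel
  have classical := sum_toForm_isConnection hEuler (m := LinearMap.mul' ℂ A) (by simp)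
    (fun _ _ _ ha _ ha' => SetLike.mul_mem_graded ha ha') hp hz hzs hrel
  have deformed := sum_toForm_isConnection hEuler (m := TensorProduct.lift stp) hstp.apply_one
    (fun _ _ _ ha _ ha' => hstp.apply_mem ha ha') hp hz hzs
    (by simpa [hstp _ _ _ (hzs _) _ (hz _), phase_neg_self] using hrel)
  refine ⟨classical, ?_, ?_, deformed, ?_⟩
  · exact setOf_mkQ_eq_of_le classical.1 (degree_zero classical.2.1) classical.2.2
      (map_toForm_mul_le_ker_verticalLift hEuler) (ker_verticalLift_mul_le_sup hEuler frame)
  · refine ⟨subalgebraKaehlerInclusion Bsub, ?_, ?_, subalgebraKaehlerInclusion_D Bsub,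
      fun lact hlact b w => subalgebraKaehlerInclusion_smul Bsub (hlact b) w⟩
    · exact (kaehlerInclusion_injective ℂ A).comp (kaehlerDifferential_map_injective frame hBsub)
    · exact hBsub ▸ range_subalgebraKaehlerInclusion Bsub
  · exact setOf_mkQ_eq_of_le deformed.1 (degree_zero deformed.2.1) deformed.2.2
      (map_toForm_star_le_ker_verticalLift hstp hEuler)
      (ker_verticalLift_star_le_sup hstp hEuler hbmul frame)

/-- `ω⁰ = z₁* dz₁ + z₂* dz₂ ∈ Ω¹(A)` is `ℤ²`-homogeneous of degree
`(0,0)` and satisfies `v(ω⁰) = 1`, so it is a connection, and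
`Con(A,δ) = {ω⁰ + α : α ∈ B dB}` with `B dB ≅ Ω¹_{B/ℂ}` as a `B`-module with
derivation; analogously `ω⁰_θ = z₁* d_θz₁ + z₂* d_θz₂ ∈ Ω¹(A_θ)` is homogeneous of
degree `(0,0)`, satisfies `v_θ(ω⁰_θ) = 1`, and `Con(A_θ,δ) = {ω⁰_θ + α : α ∈ B d_θB}`. -/
theorem connections_on_classical_and_deformed_hopf_fibrations
    (A : Type) [CommRing A] [Algebra ℂ A]
    (𝒜 : ℤ × ℤ → Submodule ℂ A) [GradedAlgebra 𝒜]
    (z1 z2 z1s z2s : A)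
    (hz1 : z1 ∈ 𝒜 (1, 0)) (hz2 : z2 ∈ 𝒜 (0, 1))
    (hz1s : z1s ∈ 𝒜 (-1, 0)) (hz2s : z2s ∈ 𝒜 (0, -1))
    (hrel : z1s * z1 + z2s * z2 = 1)
    (huniv : ∀ (C : Type) [CommRing C] [Algebra ℂ C] (w1 w2 w1s w2s : C),
      w1s * w1 + w2s * w2 = 1 →
      ∃! f : A →ₐ[ℂ] C, f z1 = w1 ∧ f z2 = w2 ∧ f z1s = w1s ∧ f z2s = w2s)
    (θ : ℝ)
    (stp : A →ₗ[ℂ] A →ₗ[ℂ] A)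
    (hstp : ∀ (p q : ℤ × ℤ), ∀ a ∈ 𝒜 p, ∀ a' ∈ 𝒜 q, stp a a' = phase θ p q • (a * a'))
    (bmul : A ⊗[ℂ] A →ₗ[ℂ] A ⊗[ℂ] A →ₗ[ℂ] A ⊗[ℂ] A)
    (hbmul : ∀ (p p' u u' : ℤ × ℤ), ∀ a ∈ 𝒜 p, ∀ a' ∈ 𝒜 p', ∀ c ∈ 𝒜 u, ∀ c' ∈ 𝒜 u',
      bmul (a ⊗ₜ[ℂ] a') (c ⊗ₜ[ℂ] c')
        = rphase θ u p' • ((stp a c) ⊗ₜ[ℂ] (stp a' c')))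
    -- the Euler operator, multiplying total-degree-`n` elements by `n`
    (Euler : A →ₗ[ℂ] A)
    (hEuler : ∀ (p : ℤ × ℤ), ∀ a ∈ 𝒜 p, Euler a = ((p.1 + p.2 : ℤ) : ℂ) • a)
    -- `B` as subalgebra of total-degree-`0` elements
    (Bsub : Subalgebra ℂ A) (hBsub : Bsub.toSubmodule = totalDeg 𝒜 0) :
    -- notation: `K = Γ¹(A)`, `K2 = (Γ¹(A))²`, `Kθ = Γ¹(A_θ)`, `K2θ = (Γ¹(A_θ))²`,
    -- `vrep`/`vθrep` the vertical lifts on representatives, `ωrep`/`ωθrep` the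
    -- representatives of `ω⁰`/`ω⁰_θ`, and `BdB`/`BdθB` the representatives of the
    -- horizontal forms `B dB`/`B d_θB`
    ∀ (K K2 Kθ K2θ : Submodule ℂ (A ⊗[ℂ] A))
      (vrep vθrep : A ⊗[ℂ] A →ₗ[ℂ] A) (ωrep ωθrep : A ⊗[ℂ] A)
      (BdB BdθB : Submodule ℂ (A ⊗[ℂ] A)),
      K = LinearMap.ker (LinearMap.mul' ℂ A) →
      K2 = K * K →
      Kθ = LinearMap.ker (TensorProduct.lift stp) →
      K2θ = Submodule.span ℂ {y : A ⊗[ℂ] A | ∃ x ∈ Kθ, ∃ x' ∈ Kθ, y = bmul x x'} →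
      vrep = (LinearMap.mul' ℂ A).comp (TensorProduct.map LinearMap.id Euler) →
      vθrep = (TensorProduct.lift stp).comp (TensorProduct.map LinearMap.id Euler) →
      ωrep = z1s ⊗ₜ[ℂ] z1 - (z1s * z1) ⊗ₜ[ℂ] (1 : A)
        + (z2s ⊗ₜ[ℂ] z2 - (z2s * z2) ⊗ₜ[ℂ] (1 : A)) →
      ωθrep = (stp z1s 1) ⊗ₜ[ℂ] z1 - (stp z1s z1) ⊗ₜ[ℂ] (1 : A)
        + ((stp z2s 1) ⊗ₜ[ℂ] z2 - (stp z2s z2) ⊗ₜ[ℂ] (1 : A)) →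
      BdB = Submodule.span ℂ {y : A ⊗[ℂ] A | ∃ b ∈ totalDeg 𝒜 0, ∃ b' ∈ totalDeg 𝒜 0,
        y = b ⊗ₜ[ℂ] b' - (b * b') ⊗ₜ[ℂ] (1 : A)} →
      BdθB = Submodule.span ℂ {y : A ⊗[ℂ] A | ∃ b ∈ totalDeg 𝒜 0, ∃ b' ∈ totalDeg 𝒜 0,
        y = (stp b 1) ⊗ₜ[ℂ] b' - (stp b b') ⊗ₜ[ℂ] (1 : A)} →
      -- the classical `ω⁰` is a homogeneous `1`-form of degree `(0,0)` with `v(ω⁰) = 1`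
      (ωrep ∈ K ∧ ωrep ∈ tensorDeg 𝒜 (0, 0) ∧ vrep ωrep = 1) ∧
      -- the classical space of connections is the affine space `ω⁰ + B dB`
      ({w : (A ⊗[ℂ] A) ⧸ K2 | ∃ x : A ⊗[ℂ] A,
          x ∈ K ∧ x ∈ tensorTotalDeg 𝒜 0 ∧ vrep x = 1 ∧ w = K2.mkQ x}
        = {w : (A ⊗[ℂ] A) ⧸ K2 | ∃ x ∈ BdB, w = K2.mkQ (ωrep + x)}) ∧
      -- `B dB ≅ Ω¹_{B/ℂ}` as a `B`-module with derivation
      (∃ e : KaehlerDifferential ℂ ↥Bsub →ₗ[ℂ] ((A ⊗[ℂ] A) ⧸ K2),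
        Function.Injective e ∧
        LinearMap.range e = Submodule.map K2.mkQ BdB ∧
        (∀ b : ↥Bsub,
          e (KaehlerDifferential.D ℂ ↥Bsub b)
            = K2.mkQ ((1 : A) ⊗ₜ[ℂ] (b : A) - (b : A) ⊗ₜ[ℂ] (1 : A))) ∧
        (∀ (lact : A → ((A ⊗[ℂ] A) ⧸ K2) →ₗ[ℂ] ((A ⊗[ℂ] A) ⧸ K2)),
          (∀ (a : A) (x : A ⊗[ℂ] A), lact a (K2.mkQ x)
            = K2.mkQ (TensorProduct.map (LinearMap.mulLeft ℂ a) LinearMap.id x)) →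
          ∀ (b : ↥Bsub) (w : KaehlerDifferential ℂ ↥Bsub),
            e (b • w) = lact (b : A) (e w))) ∧
      -- the deformed `ω⁰_θ` is a homogeneous `1`-form of degree `(0,0)` with
      -- `v_θ(ω⁰_θ) = 1`
      (ωθrep ∈ Kθ ∧ ωθrep ∈ tensorDeg 𝒜 (0, 0) ∧ vθrep ωθrep = 1) ∧
      -- the deformed space of connections is the affine space `ω⁰_θ + B d_θB`
      ({w : (A ⊗[ℂ] A) ⧸ K2θ | ∃ x : A ⊗[ℂ] A,
          x ∈ Kθ ∧ x ∈ tensorTotalDeg 𝒜 0 ∧ vθrep x = 1 ∧ w = K2θ.mkQ x}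
        = {w : (A ⊗[ℂ] A) ⧸ K2θ | ∃ x ∈ BdθB, w = K2θ.mkQ (ωθrep + x)}) := by
  intro K K2 Kθ K2θ vrep vθrep ωrep ωθrep BdB BdθB hK hK2 hKθ hK2θ hv hvθ hω hωθ hBdB hBdθB
  exact connections_on_classical_and_deformed_hopf_fibrations_general (p := ![(1, 0), (0, 1)])
    (z := ![z1, z2]) (zs := ![z1s, z2s]) (by simp) (by simp [hz1, hz2]) (by simp [hz1s, hz2s])
    (by simpa using hrel) hstp hbmul hEuler hBsub hK hK2 hKθ hK2θ hv hvθ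
    (by rw [Fin.sum_univ_two]; exact hω) (by rw [Fin.sum_univ_two]; exact hωθ) hBdB hBdθB
end
end

section
/- The bijection φ̄_θ : Con(A_θ,δ) → Con(A,δ) satisfies φ̄_θ(ω⁰_θ) = ω⁰ and φ̄_θ(b d_θ b') = b db' for all b, b' ∈ B; hence it is given explicitly by ω⁰_θ + α ↦ ω⁰ + α, i.e., it preserves the base points ω⁰_θ and ω⁰ and its linear part is the identity map on Ω¹(B) = B dB. -/
/-!
The phase `e^{πiθ(m₁m₂' − m₂m₁')}` is the exponential of a determinant of degrees, so it is trivial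
on pairs of parallel degrees. Every tensor in sight lies in the span of such pairs: two degrees of
total degree `0` are both multiples of `(1, -1)`, the degrees of `zᵢ*` and `zᵢ` are opposite, and
the degree `0` of `1` is parallel to everything. On that span `φ_θ` is the identity and `⋆_θ` is
the ordinary product, so a form and its deformation have the same representative, which `φ_θ` fixes.
-/

set_option synthInstance.maxHeartbeats 1000000
set_option maxHeartbeats 1000000

open scoped TensorProduct
noncomputable section

theorem phase_eq_one_of_det_eq_zero {θ : ℝ} {p q : ℤ × ℤ} (h : p.1 * q.2 - p.2 * q.1 = 0) :
    phase θ p q = 1 := by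
  simp [phase, h]

section ParallelTensors

variable {A : Type*} [AddCommMonoid A] [Module ℂ A]

/-- The span of the tensors `a ⊗ a'` of homogeneous elements whose degrees are parallel, that is,
have determinant `0`. The phase is trivial on it for every `θ`. -/
def parallelTensors (𝒜 : ℤ × ℤ → Submodule ℂ A) : Submodule ℂ (A ⊗[ℂ] A) :=
  ⨆ (p : ℤ × ℤ) (q : ℤ × ℤ) (_ : p.1 * q.2 - p.2 * q.1 = 0),
    Submodule.map₂ (TensorProduct.mk ℂ A A) (𝒜 p) (𝒜 q)

variable {𝒜 : ℤ × ℤ → Submodule ℂ A}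

theorem map₂_mk_le_parallelTensors {p q : ℤ × ℤ} (h : p.1 * q.2 - p.2 * q.1 = 0) :
    Submodule.map₂ (TensorProduct.mk ℂ A A) (𝒜 p) (𝒜 q) ≤ parallelTensors 𝒜 :=
  le_iSup_of_le p <| le_iSup₂_of_le q h le_rfl

theorem tmul_mem_parallelTensors_of_neg {p : ℤ × ℤ} {a a' : A} (ha : a ∈ 𝒜 (-p))
    (ha' : a' ∈ 𝒜 p) : a ⊗ₜ[ℂ] a' ∈ parallelTensors 𝒜 :=
  map₂_mk_le_parallelTensors (by simp only [Prod.fst_neg, Prod.snd_neg]; ring)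
    (Submodule.apply_mem_map₂ _ ha ha')

theorem tmul_mem_parallelTensors_of_mem_zero [DirectSum.Decomposition 𝒜] (a : A) {e : A}
    (he : e ∈ 𝒜 0) : a ⊗ₜ[ℂ] e ∈ parallelTensors 𝒜 := by
  have hle : Submodule.map₂ (TensorProduct.mk ℂ A A) (⨆ p, 𝒜 p) (𝒜 0) ≤ parallelTensors 𝒜 := by
    rw [Submodule.map₂_iSup_left]
    exact iSup_le fun p => map₂_mk_le_parallelTensors (by simp)
  have ha : a ∈ ⨆ p, 𝒜 p :=
    (DirectSum.Decomposition.isInternal 𝒜).submodule_iSup_eq_top ▸ Submodule.mem_top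
  exact hle (Submodule.apply_mem_map₂ _ ha he)

end ParallelTensors

theorem tmul_mem_parallelTensors_of_totalDeg_zero {A : Type} [AddCommMonoid A] [Module ℂ A]
    {𝒜 : ℤ × ℤ → Submodule ℂ A} {b b' : A} (hb : b ∈ totalDeg 𝒜 0) (hb' : b' ∈ totalDeg 𝒜 0) :
    b ⊗ₜ[ℂ] b' ∈ parallelTensors 𝒜 := by
  have hle : Submodule.map₂ (TensorProduct.mk ℂ A A) (totalDeg 𝒜 0) (totalDeg 𝒜 0)
      ≤ parallelTensors 𝒜 := by
    simp only [totalDeg, Submodule.map₂_iSup_left, Submodule.map₂_iSup_right, iSup_le_iff]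
    intro p hp q hq
    refine map₂_mk_le_parallelTensors ?_
    rw [eq_neg_of_add_eq_zero_left hp, eq_neg_of_add_eq_zero_left hq]
    ring
  exact hle (Submodule.apply_mem_map₂ _ hb hb')

section PhaseTwist

variable {A M : Type*} [AddCommMonoid A] [Module ℂ A] [AddCommMonoid M] [Module ℂ M]
  {𝒜 : ℤ × ℤ → Submodule ℂ A} {θ : ℝ} {f g : A →ₗ[ℂ] A →ₗ[ℂ] M}

/-- The bilinear map `f` is the deformation of `g` by the phase. The star product `⋆_θ` deforms the
product in this sense, and the phase map `φ_θ` deforms `(a, a') ↦ a ⊗ a'`. -/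
def IsPhaseTwist (𝒜 : ℤ × ℤ → Submodule ℂ A) (θ : ℝ) (f g : A →ₗ[ℂ] A →ₗ[ℂ] M) : Prop :=
  ∀ p q : ℤ × ℤ, ∀ a ∈ 𝒜 p, ∀ a' ∈ 𝒜 q, f a a' = phase θ p q • g a a'

theorem IsPhaseTwist.lift_eq_of_mem_parallelTensors (h : IsPhaseTwist 𝒜 θ f g) {t : A ⊗[ℂ] A}
    (ht : t ∈ parallelTensors 𝒜) : TensorProduct.lift f t = TensorProduct.lift g t := by
  have hle : parallelTensors 𝒜
      ≤ LinearMap.eqLocus (TensorProduct.lift f) (TensorProduct.lift g) := by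
    refine iSup_le fun p => iSup₂_le fun q hpq => Submodule.map₂_le.2 fun a ha a' ha' => ?_
    simpa [phase_eq_one_of_det_eq_zero hpq] using h p q a ha a' ha'
  exact hle ht

theorem IsPhaseTwist.apply_eq_of_tmul_mem (h : IsPhaseTwist 𝒜 θ f g) {a a' : A}
    (ha : a ⊗ₜ[ℂ] a' ∈ parallelTensors 𝒜) : f a a' = g a a' := by
  simpa only [TensorProduct.lift.tmul] using h.lift_eq_of_mem_parallelTensors ha

theorem IsPhaseTwist.map_eq_self_of_mem_parallelTensors {φ : A ⊗[ℂ] A →ₗ[ℂ] A ⊗[ℂ] A}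
    (hφ : IsPhaseTwist 𝒜 θ ((TensorProduct.mk ℂ A A).compr₂ φ) (TensorProduct.mk ℂ A A))
    {t : A ⊗[ℂ] A} (ht : t ∈ parallelTensors 𝒜) : φ t = t := by
  simpa only [TensorProduct.lift_mk_compr₂, TensorProduct.lift_mk, LinearMap.id_apply]
    using hφ.lift_eq_of_mem_parallelTensors ht

end PhaseTwist

section OneForms

variable {A : Type} [Ring A] [Algebra ℂ A]

/-- The representative `a (1 ⊗ a' - a' ⊗ 1)` in `A ⊗ A` of the one-form `a da'`. -/
def oneForm (a a' : A) : A ⊗[ℂ] A :=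
  a ⊗ₜ[ℂ] a' - (a * a') ⊗ₜ[ℂ] (1 : A)

/-- The representative `a (1 ⊗ a' - a' ⊗ 1)` in `A ⊗ A` of the one-form `a d_θ a'`, where `A` acts
on the first factor by the deformed product `stp`. -/
def starOneForm (stp : A →ₗ[ℂ] A →ₗ[ℂ] A) (a a' : A) : A ⊗[ℂ] A :=
  (stp a 1) ⊗ₜ[ℂ] a' - (stp a a') ⊗ₜ[ℂ] (1 : A)

/-- The representatives of `Ω¹(B) = B dB`, where `B` is the subalgebra of total degree `0`. The map
`form` sends `b, b'` to the representative of `b db'`, so that one definition serves both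
`oneForm` and `starOneForm`. -/
def baseForms (𝒜 : ℤ × ℤ → Submodule ℂ A) (form : A → A → A ⊗[ℂ] A) : Submodule ℂ (A ⊗[ℂ] A) :=
  Submodule.span ℂ {y | ∃ b ∈ totalDeg 𝒜 0, ∃ b' ∈ totalDeg 𝒜 0, y = form b b'}

variable {𝒜 : ℤ × ℤ → Submodule ℂ A} [GradedAlgebra 𝒜] {θ : ℝ} {stp : A →ₗ[ℂ] A →ₗ[ℂ] A}
  {φ : A ⊗[ℂ] A →ₗ[ℂ] A ⊗[ℂ] A}

theorem oneForm_mem_parallelTensors {a a' : A} (h : a ⊗ₜ[ℂ] a' ∈ parallelTensors 𝒜) :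
    oneForm a a' ∈ parallelTensors 𝒜 :=
  sub_mem h (tmul_mem_parallelTensors_of_mem_zero _ SetLike.GradedOne.one_mem)

theorem baseForms_oneForm_le_parallelTensors : baseForms 𝒜 oneForm ≤ parallelTensors 𝒜 := by
  refine Submodule.span_le.2 ?_
  rintro _ ⟨b, hb, b', hb', rfl⟩
  exact oneForm_mem_parallelTensors (tmul_mem_parallelTensors_of_totalDeg_zero hb hb')

theorem starOneForm_eq_oneForm (hstp : IsPhaseTwist 𝒜 θ stp (LinearMap.mul ℂ A)) {a a' : A}
    (h : a ⊗ₜ[ℂ] a' ∈ parallelTensors 𝒜) : starOneForm stp a a' = oneForm a a' := by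
  have hone : a ⊗ₜ[ℂ] (1 : A) ∈ parallelTensors 𝒜 :=
    tmul_mem_parallelTensors_of_mem_zero a SetLike.GradedOne.one_mem
  simp only [starOneForm, oneForm, hstp.apply_eq_of_tmul_mem h, hstp.apply_eq_of_tmul_mem hone,
    LinearMap.mul_apply', mul_one]

theorem baseForms_starOneForm (hstp : IsPhaseTwist 𝒜 θ stp (LinearMap.mul ℂ A)) :
    baseForms 𝒜 (starOneForm stp) = baseForms 𝒜 oneForm := by
  refine congrArg (Submodule.span ℂ) (Set.ext fun y => ?_)
  refine exists_congr fun b => and_congr_right fun hb => exists_congr fun b' =>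
    and_congr_right fun hb' => ?_
  rw [starOneForm_eq_oneForm hstp (tmul_mem_parallelTensors_of_totalDeg_zero hb hb')]

theorem phase_map_of_connections_explicit_general
    {ι : Type*} [Fintype ι] {z zs : ι → A} {deg : ι → ℤ × ℤ}
    (hz : ∀ i, z i ∈ 𝒜 (deg i)) (hzs : ∀ i, zs i ∈ 𝒜 (-deg i))
    (hstp : IsPhaseTwist 𝒜 θ stp (LinearMap.mul ℂ A))
    (hφ : IsPhaseTwist 𝒜 θ ((TensorProduct.mk ℂ A A).compr₂ φ) (TensorProduct.mk ℂ A A))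
    {N Nθ : Submodule ℂ (A ⊗[ℂ] A)} {φbar : ((A ⊗[ℂ] A) ⧸ Nθ) →ₗ[ℂ] ((A ⊗[ℂ] A) ⧸ N)}
    (hφbar : ∀ x, φbar (Nθ.mkQ x) = N.mkQ (φ x)) :
    baseForms 𝒜 (starOneForm stp) = baseForms 𝒜 oneForm ∧
    φbar (Nθ.mkQ (∑ i, starOneForm stp (zs i) (z i))) = N.mkQ (∑ i, oneForm (zs i) (z i)) ∧
    (∀ b ∈ totalDeg 𝒜 0, ∀ b' ∈ totalDeg 𝒜 0,
      φbar (Nθ.mkQ (starOneForm stp b b')) = N.mkQ (oneForm b b')) ∧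
    (∀ x ∈ baseForms 𝒜 oneForm,
      φbar (Nθ.mkQ (∑ i, starOneForm stp (zs i) (z i) + x))
        = N.mkQ (∑ i, oneForm (zs i) (z i) + x)) := by
  have fixed : ∀ t ∈ parallelTensors 𝒜, φbar (Nθ.mkQ t) = N.mkQ t := fun t ht => by
    rw [hφbar, hφ.map_eq_self_of_mem_parallelTensors ht]
  have hpair (i : ι) : zs i ⊗ₜ[ℂ] z i ∈ parallelTensors 𝒜 :=
    tmul_mem_parallelTensors_of_neg (hzs i) (hz i)
  have hω : ∑ i, starOneForm stp (zs i) (z i) = ∑ i, oneForm (zs i) (z i) :=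
    Finset.sum_congr rfl fun i _ => starOneForm_eq_oneForm hstp (hpair i)
  have hω_mem : ∑ i, oneForm (zs i) (z i) ∈ parallelTensors 𝒜 :=
    sum_mem fun i _ => oneForm_mem_parallelTensors (hpair i)
  rw [hω]
  refine ⟨baseForms_starOneForm hstp, fixed _ hω_mem, fun b hb b' hb' => ?_, fun x hx => ?_⟩
  · have hbb' := tmul_mem_parallelTensors_of_totalDeg_zero hb hb'
    rw [starOneForm_eq_oneForm hstp hbb', fixed _ (oneForm_mem_parallelTensors hbb')]
  · exact fixed _ (add_mem hω_mem (baseForms_oneForm_le_parallelTensors hx))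

end OneForms

/-- the bijection `φ̄_θ : Con(A_θ,δ) → Con(A,δ)` satisfies
`φ̄_θ(ω⁰_θ) = ω⁰` and `φ̄_θ(b d_θ b') = b db'` for all `b, b' ∈ B`; hence it is given
explicitly by `ω⁰_θ + α ↦ ω⁰ + α`: it preserves the base points and its linear part is
the identity on `Ω¹(B) = B dB`. -/
theorem phase_map_of_connections_explicit
    (A : Type) [CommRing A] [Algebra ℂ A]
    (𝒜 : ℤ × ℤ → Submodule ℂ A) [GradedAlgebra 𝒜]
    (z1 z2 z1s z2s : A)
    (hz1 : z1 ∈ 𝒜 (1, 0)) (hz2 : z2 ∈ 𝒜 (0, 1))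
    (hz1s : z1s ∈ 𝒜 (-1, 0)) (hz2s : z2s ∈ 𝒜 (0, -1))
    (hrel : z1s * z1 + z2s * z2 = 1)
    (huniv : ∀ (C : Type) [CommRing C] [Algebra ℂ C] (w1 w2 w1s w2s : C),
      w1s * w1 + w2s * w2 = 1 →
      ∃! f : A →ₐ[ℂ] C, f z1 = w1 ∧ f z2 = w2 ∧ f z1s = w1s ∧ f z2s = w2s)
    (θ : ℝ)
    (stp : A →ₗ[ℂ] A →ₗ[ℂ] A)
    (hstp : ∀ (p q : ℤ × ℤ), ∀ a ∈ 𝒜 p, ∀ a' ∈ 𝒜 q, stp a a' = phase θ p q • (a * a'))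
    (bmul : A ⊗[ℂ] A →ₗ[ℂ] A ⊗[ℂ] A →ₗ[ℂ] A ⊗[ℂ] A)
    (hbmul : ∀ (p p' u u' : ℤ × ℤ), ∀ a ∈ 𝒜 p, ∀ a' ∈ 𝒜 p', ∀ c ∈ 𝒜 u, ∀ c' ∈ 𝒜 u',
      bmul (a ⊗ₜ[ℂ] a') (c ⊗ₜ[ℂ] c')
        = rphase θ u p' • ((stp a c) ⊗ₜ[ℂ] (stp a' c')))
    -- the cocycle phase map `φ_θ` on `A ⊗ A`
    (φ : A ⊗[ℂ] A →ₗ[ℂ] A ⊗[ℂ] A)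
    (hφ : ∀ (p q : ℤ × ℤ), ∀ a ∈ 𝒜 p, ∀ a' ∈ 𝒜 q,
      φ (a ⊗ₜ[ℂ] a') = phase θ p q • (a ⊗ₜ[ℂ] a')) :
    ∀ (K K2 Kθ K2θ : Submodule ℂ (A ⊗[ℂ] A)) (ωrep ωθrep : A ⊗[ℂ] A)
      (BdB BdθB : Submodule ℂ (A ⊗[ℂ] A)),
      K = LinearMap.ker (LinearMap.mul' ℂ A) →
      K2 = K * K →
      Kθ = LinearMap.ker (TensorProduct.lift stp) →
      K2θ = Submodule.span ℂ {y : A ⊗[ℂ] A | ∃ x ∈ Kθ, ∃ x' ∈ Kθ, y = bmul x x'} →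
      ωrep = z1s ⊗ₜ[ℂ] z1 - (z1s * z1) ⊗ₜ[ℂ] (1 : A)
        + (z2s ⊗ₜ[ℂ] z2 - (z2s * z2) ⊗ₜ[ℂ] (1 : A)) →
      ωθrep = (stp z1s 1) ⊗ₜ[ℂ] z1 - (stp z1s z1) ⊗ₜ[ℂ] (1 : A)
        + ((stp z2s 1) ⊗ₜ[ℂ] z2 - (stp z2s z2) ⊗ₜ[ℂ] (1 : A)) →
      BdB = Submodule.span ℂ {y : A ⊗[ℂ] A | ∃ b ∈ totalDeg 𝒜 0, ∃ b' ∈ totalDeg 𝒜 0,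
        y = b ⊗ₜ[ℂ] b' - (b * b') ⊗ₜ[ℂ] (1 : A)} →
      BdθB = Submodule.span ℂ {y : A ⊗[ℂ] A | ∃ b ∈ totalDeg 𝒜 0, ∃ b' ∈ totalDeg 𝒜 0,
        y = (stp b 1) ⊗ₜ[ℂ] b' - (stp b b') ⊗ₜ[ℂ] (1 : A)} →
      ∀ (φbar : ((A ⊗[ℂ] A) ⧸ K2θ) →ₗ[ℂ] ((A ⊗[ℂ] A) ⧸ K2)),
        (∀ x : A ⊗[ℂ] A, φbar (K2θ.mkQ x) = K2.mkQ (φ x)) →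
        -- `B d_θ B = B dB` as subspaces of representatives
        BdθB = BdB ∧
        -- `φ̄_θ` preserves the base points: `φ̄_θ(ω⁰_θ) = ω⁰`
        φbar (K2θ.mkQ ωθrep) = K2.mkQ ωrep ∧
        -- `φ̄_θ(b d_θ b') = b db'` for all `b, b' ∈ B`
        (∀ b ∈ totalDeg 𝒜 0, ∀ b' ∈ totalDeg 𝒜 0,
          φbar (K2θ.mkQ ((stp b 1) ⊗ₜ[ℂ] b' - (stp b b') ⊗ₜ[ℂ] (1 : A)))
            = K2.mkQ (b ⊗ₜ[ℂ] b' - (b * b') ⊗ₜ[ℂ] (1 : A))) ∧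
        -- hence `φ̄_θ` is explicitly given by `ω⁰_θ + α ↦ ω⁰ + α`
        (∀ x ∈ BdB, φbar (K2θ.mkQ (ωθrep + x)) = K2.mkQ (ωrep + x)) := by
  rintro _ _ _ _ _ _ _ _ rfl rfl rfl rfl rfl rfl rfl rfl _ hφbar
  simpa only [Fin.sum_univ_two, Matrix.cons_val_zero, Matrix.cons_val_one, baseForms, starOneForm,
    oneForm] using phase_map_of_connections_explicit_general
    (z := ![z1, z2]) (zs := ![z1s, z2s]) (deg := ![(1, 0), (0, 1)])
    (Fin.forall_fin_two.2 ⟨hz1, hz2⟩) (Fin.forall_fin_two.2 ⟨hz1s, hz2s⟩) hstp hφ hφbar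
end
end
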